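/- In G(𝒜): if the m-th symbol of L is a function symbol f of arity n, and a₁,…,aₙ, a' ∈ A are such that w_m(a₁,…,aₙ,b) = a' holds in G(𝒜) (where the aᵢ and a' denote the images of the corresponding generators), then f^𝒜(a₁,…,aₙ) = a' in 𝒜. -/

import Mathlib

/-!
Common setup: an `L`-structure `𝒜` for a language whose symbols are enumerated
(`m`-th symbol, `m ≥ 1`, each a function or relation symbol of arity ≥ 1), and the
presented group `G(𝒜)` of Harrison-Trainor and Ho.
-/

/-- A first-order language with symbols enumerated by `ℕ` (the `m`-th symbol, for `m ≥ 1`,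
is a function symbol if `isFunc m`, and a relation symbol otherwise, of arity `arity m ≥ 1`),
together with an interpretation on a domain `A`: `funcInterp m` interprets the `m`-th symbol
when it is a function symbol, and `relInterp m` when it is a relation symbol. -/
structure IndexedStructure where
  A : Type
  arity : ℕ → ℕ
  arity_pos : ∀ m, 1 ≤ m → 1 ≤ arity m
  isFunc : ℕ → Prop
  funcInterp : ∀ m, (Fin (arity m) → A) → A
  relInterp : ∀ m, (Fin (arity m) → A) → Prop

/-- The generating set of `G(𝒜)`: one generator for each element of the domain `A`,
plus five further generators `b`, `c`, `d`, `f₁`, `f₂`. -/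
inductive GenSym (A : Type) : Type
  | elt : A → GenSym A
  | b : GenSym A
  | c : GenSym A
  | d : GenSym A
  | f1 : GenSym A
  | f2 : GenSym A

/-- `chainProd lo x y = x y^{(lo+1)²} x y^{(lo+2)²} ⋯ x y^{(lo+1000)²}`.
So `u_A = chainProd 0`, `u_b = chainProd 1000`, `u_c = chainProd 2000`,
`u_d = chainProd 3000`, and `v = chainProd 4000`. -/
def chainProd {G : Type*} [Group G] (lo : ℕ) (x y : G) : G :=
  ((List.range 1000).map fun k => x * y ^ ((lo + k + 1) ^ 2)).prod

/-- `wProd m xs y = x₁⋯xₙ y^{100m+1} x₁⋯xₙ y^{100m+2} ⋯ x₁⋯xₙ y^{100m+100}`,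
i.e. the word `w_m(x₁,…,xₙ,y)`. -/
def wProd {G : Type*} [Group G] (m : ℕ) {n : ℕ} (xs : Fin n → G) (y : G) : G :=
  ((List.range 100).map fun k => (List.ofFn xs).prod * y ^ (100 * m + k + 1)).prod

/-- The set of relators of the presentation of `G(𝒜)`. -/
def grpRels (S : IndexedStructure) (p₁ p₂ : ℕ) : Set (FreeGroup (GenSym S.A)) :=
  {FreeGroup.of GenSym.f1 ^ p₁, FreeGroup.of GenSym.f2 ^ p₂,
    chainProd 4000 (FreeGroup.of GenSym.f1) (FreeGroup.of GenSym.f2),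
    chainProd 4000 (FreeGroup.of GenSym.f2) (FreeGroup.of GenSym.f1),
    chainProd 1000 (FreeGroup.of GenSym.b) (FreeGroup.of GenSym.f1),
    chainProd 1000 (FreeGroup.of GenSym.b) (FreeGroup.of GenSym.f2),
    chainProd 2000 (FreeGroup.of GenSym.c) (FreeGroup.of GenSym.f1),
    chainProd 2000 (FreeGroup.of GenSym.c) (FreeGroup.of GenSym.f2),
    chainProd 3000 (FreeGroup.of GenSym.d) (FreeGroup.of GenSym.f1),
    chainProd 3000 (FreeGroup.of GenSym.d) (FreeGroup.of GenSym.f2)}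
  ∪ {r | ∃ a : S.A,
      r = chainProd 0 (FreeGroup.of (GenSym.elt a)) (FreeGroup.of GenSym.c) ∨
      r = chainProd 0 (FreeGroup.of (GenSym.elt a)) (FreeGroup.of GenSym.d)}
  ∪ {r | ∃ m, 1 ≤ m ∧ S.isFunc m ∧ ∃ as : Fin (S.arity m) → S.A,
      r = wProd m (fun i => FreeGroup.of (GenSym.elt (as i))) (FreeGroup.of GenSym.b) *
        (FreeGroup.of (GenSym.elt (S.funcInterp m as)))⁻¹}
  ∪ {r | ∃ m, 1 ≤ m ∧ ¬ S.isFunc m ∧ ∃ as : Fin (S.arity m) → S.A,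
      S.relInterp m as ∧
      r = wProd m (fun i => FreeGroup.of (GenSym.elt (as i))) (FreeGroup.of GenSym.b)}

/-- The group `G(𝒜)`, presented on the generators `GenSym A` with relators `grpRels`. -/
abbrev GA (S : IndexedStructure) (p₁ p₂ : ℕ) : Type :=
  PresentedGroup (grpRels S p₁ p₂)

/-- The image in `G(𝒜)` of a generator. -/
def gen (S : IndexedStructure) (p₁ p₂ : ℕ) (g : GenSym S.A) : GA S p₁ p₂ :=
  PresentedGroup.of g

namespace SmallCanc
open FreeGroup

/-- Inverse letter. -/
def bar {α : Type} (l : α × Bool) : α × Bool := (l.1, !l.2)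

theorem bar_bar {α : Type} (l : α × Bool) : bar (bar l) = l := by
  simp [bar]

theorem bar_inj {α : Type} {l l' : α × Bool} (h : bar l = bar l') : l = l' := by
  rw [← bar_bar l, h, bar_bar]

theorem bar_ne {α : Type} (l : α × Bool) : bar l ≠ l := by
  rcases l with ⟨a, b⟩
  cases b <;> simp [bar]

theorem mk_bar {α : Type} (l : α × Bool) : (mk [bar l] : FreeGroup α) = (mk [l])⁻¹ := by
  simp [bar, FreeGroup.inv_mk, FreeGroup.invRev]

/-- Reflection of a bi-infinite word. -/
def rev {α : Type} (c : ℤ) (ρ : ℤ → α × Bool) : ℤ → α × Bool := fun k => bar (ρ (c - 1 - k))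

/-- Finite segment of a bi-infinite word. -/
def seg {α : Type} (ρ : ℤ → α × Bool) (i : ℤ) (n : ℕ) : List (α × Bool) :=
  (List.range n).map fun t : ℕ => ρ (i + t)

theorem seg_length {α : Type} (ρ : ℤ → α × Bool) (i : ℤ) (n : ℕ) : (seg ρ i n).length = n := by
  simp [seg]

theorem seg_succ {α : Type} (ρ : ℤ → α × Bool) (i : ℤ) (n : ℕ) :
    seg ρ i (n + 1) = seg ρ i n ++ [ρ (i + n)] := by
  simp [seg, List.range_succ]

theorem seg_succ' {α : Type} (ρ : ℤ → α × Bool) (i : ℤ) (n : ℕ) :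
    seg ρ i (n + 1) = ρ i :: seg ρ (i + 1) n := by
  simp only [seg, List.range_succ_eq_map, List.map_cons, List.map_map]
  congr 1
  · simp
  · apply List.map_congr_left
    intro t _
    simp only [Function.comp]
    congr 1
    push_cast
    ring

/-- Potential along a bi-infinite word. -/
def pot {α : Type} (ρ : ℤ → α × Bool) : ℤ → FreeGroup α
  | Int.ofNat n => mk (seg ρ 0 n)
  | Int.negSucc n => (mk (seg ρ (-((n : ℤ) + 1)) (n + 1)))⁻¹

theorem pot_succ {α : Type} (ρ : ℤ → α × Bool) (k : ℤ) :
    pot ρ (k + 1) = pot ρ k * mk [ρ k] := by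
  rcases k with n | n
  · change mk (seg ρ 0 (n + 1)) = mk (seg ρ 0 n) * mk [ρ n]
    rw [seg_succ, ← FreeGroup.mul_mk]
    simp
  · rcases n with _ | n
    · change mk (seg ρ 0 0) = (mk (seg ρ (-(((0 : ℕ) : ℤ) + 1)) (0 + 1)))⁻¹ * mk [ρ (-1)]
      have h0 : seg ρ (-(((0 : ℕ) : ℤ) + 1)) (0 + 1) = [ρ (-1)] := by simp [seg]
      rw [h0, inv_mul_cancel]
      rfl
    · change (mk (seg ρ (-((n : ℤ) + 1)) (n + 1)))⁻¹ =
        (mk (seg ρ (-(((n + 1 : ℕ) : ℤ) + 1)) (n + 1 + 1)))⁻¹ * mk [ρ (Int.negSucc (n + 1))]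
      rw [seg_succ' _ _ (n + 1)]
      have h1 : (-(((n + 1 : ℕ) : ℤ) + 1)) = Int.negSucc (n + 1) := by
        rw [Int.negSucc_eq]
      have h2 : Int.negSucc (n + 1) + 1 = -((n : ℤ) + 1) := by
        rw [Int.negSucc_eq]; push_cast; ring
      rw [h1, h2]
      rw [show (ρ (Int.negSucc (n + 1)) :: seg ρ (-((n : ℤ) + 1)) (n + 1)) =
        [ρ (Int.negSucc (n + 1))] ++ seg ρ (-((n : ℤ) + 1)) (n + 1) from rfl, ← FreeGroup.mul_mk]
      group

/-- Group element read along `ρ` from `i` to `j`. -/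
def E {α : Type} (ρ : ℤ → α × Bool) (i j : ℤ) : FreeGroup α := (pot ρ i)⁻¹ * pot ρ j

theorem E_mul {α : Type} (ρ : ℤ → α × Bool) (i j k : ℤ) : E ρ i j * E ρ j k = E ρ i k := by
  simp only [E]; group

theorem E_self {α : Type} (ρ : ℤ → α × Bool) (i : ℤ) : E ρ i i = 1 := by
  simp only [E]; group

theorem E_inv {α : Type} (ρ : ℤ → α × Bool) (i j : ℤ) : (E ρ i j)⁻¹ = E ρ j i := by
  simp only [E]; group

theorem E_unique {α : Type} (ρ : ℤ → α × Bool) (h : ℤ → FreeGroup α)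
    (hh : ∀ k, h (k + 1) = h k * mk [ρ k]) (i j : ℤ) : (h i)⁻¹ * h j = E ρ i j := by
  have key : ∀ k, h k * (pot ρ k)⁻¹ = h 0 * (pot ρ 0)⁻¹ := by
    have st : ∀ k, h (k + 1) * (pot ρ (k + 1))⁻¹ = h k * (pot ρ k)⁻¹ := by
      intro k
      rw [hh, pot_succ]; group
    intro k
    induction k using Int.induction_on with
    | zero => rfl
    | succ n ih => rw [st, ih]
    | pred n ih =>
      have := st (-(n : ℤ) - 1)
      rw [sub_add_cancel] at this
      rw [← this, ih]
  have e : ∀ k, h k = h 0 * (pot ρ 0)⁻¹ * pot ρ k := by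
    intro k; rw [← key k]; group
  rw [e i, e j]
  simp only [E]; group

theorem E_succ {α : Type} (ρ : ℤ → α × Bool) (i : ℤ) : E ρ i (i + 1) = mk [ρ i] := by
  simp only [E, pot_succ]; group

theorem E_shift {α : Type} (ρ : ℤ → α × Bool) (c i j : ℤ) :
    E (fun k => ρ (k + c)) i j = E ρ (i + c) (j + c) := by
  rw [← E_unique (fun k => ρ (k + c)) (fun k => pot ρ (k + c))]
  · rfl
  · intro k
    rw [show k + 1 + c = k + c + 1 by ring, pot_succ]

theorem E_per {α : Type} (ρ : ℤ → α × Bool) (p : ℤ) (h : ∀ k, ρ (k + p) = ρ k) (n i j : ℤ) :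
    E ρ (i + n * p) (j + n * p) = E ρ i j := by
  rw [← E_shift]
  congr 1
  funext k
  induction n using Int.induction_on with
  | zero => simp
  | succ n ih =>
    rw [show k + ((n : ℤ) + 1) * p = (k + n * p) + p by ring, h, ih]
  | pred n ih =>
    rw [← ih, ← h (k + (-(n : ℤ) - 1) * p)]
    congr 1
    ring

theorem E_rev {α : Type} (ρ : ℤ → α × Bool) (c i j : ℤ) :
    E ρ i j = E (rev c ρ) (c - i) (c - j) := by
  rw [← E_unique ρ (fun k => pot (rev c ρ) (c - k))]
  · rfl
  · intro k
    have := pot_succ (rev c ρ) (c - (k + 1))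
    rw [show c - (k + 1) + 1 = c - k by ring] at this
    rw [this]
    simp only [rev]
    rw [show c - 1 - (c - (k + 1)) = k by ring, mk_bar]
    group

theorem rev_rev {α : Type} (ρ : ℤ → α × Bool) (c : ℤ) : rev c (rev c ρ) = ρ := by
  funext k
  simp only [rev, bar_bar]
  congr 1
  ring

theorem E_seg {α : Type} (ρ : ℤ → α × Bool) (i : ℤ) (n : ℕ) : E ρ i (i + n) = mk (seg ρ i n) := by
  induction n with
  | zero => simp [E_self, seg, ← FreeGroup.one_eq_mk]
  | succ n ih =>
    rw [seg_succ, ← FreeGroup.mul_mk, ← ih, ← E_succ, E_mul]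
    push_cast
    rw [add_assoc]

theorem norm_E_le {α : Type} [DecidableEq α] (ρ : ℤ → α × Bool) (i j : ℤ) :
    ((E ρ i j).norm : ℤ) ≤ |j - i| := by
  rcases le_total i j with h | h
  · obtain ⟨n, rfl⟩ := Int.le.dest h
    rw [E_seg]
    have := FreeGroup.norm_mk_le (L₁ := seg ρ i n)
    rw [seg_length] at this
    rw [abs_of_nonneg (by omega)]
    omega
  · obtain ⟨n, rfl⟩ := Int.le.dest h
    rw [← E_inv, FreeGroup.norm_inv_eq, E_seg]
    have := FreeGroup.norm_mk_le (L₁ := seg ρ j n)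
    rw [seg_length] at this
    rw [abs_of_nonpos (by omega)]
    omega

/-- Letter of a list at an integer position. -/
def gl {α : Type} (Z : List (α × Bool)) (k : ℤ) : Option (α × Bool) :=
  if k < 0 then none else Z[k.toNat]?

theorem gl_nat {α : Type} (Z : List (α × Bool)) (k : ℕ) : gl Z k = Z[k]? := by
  simp [gl]

theorem gl_neg {α : Type} (Z : List (α × Bool)) (k : ℤ) (h : k < 0) : gl Z k = none := by
  simp [gl, h]

theorem gl_ge {α : Type} (Z : List (α × Bool)) (k : ℤ) (h : (Z.length : ℤ) ≤ k) :
    gl Z k = none := by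
  obtain ⟨n, rfl⟩ := Int.eq_ofNat_of_zero_le (by omega : 0 ≤ k)
  rw [gl_nat]
  simp; omega

theorem gl_some_bound {α : Type} {Z : List (α × Bool)} {k : ℤ} {l : α × Bool}
    (h : gl Z k = some l) : 0 ≤ k ∧ k < Z.length := by
  constructor
  · by_contra hh
    rw [gl_neg _ _ (by omega)] at h
    cases h
  · by_contra hh
    rw [gl_ge _ _ (by omega)] at h
    cases h

theorem gl_append_left {α : Type} (A B : List (α × Bool)) (k : ℤ) (h : k < A.length) :
    gl (A ++ B) k = gl A k := by
  by_cases hk : k < 0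
  · rw [gl_neg _ _ hk, gl_neg _ _ hk]
  · obtain ⟨n, rfl⟩ := Int.eq_ofNat_of_zero_le (by omega : 0 ≤ k)
    rw [gl_nat, gl_nat, List.getElem?_append_left (by omega)]

theorem gl_append_right {α : Type} (A B : List (α × Bool)) (k : ℤ) (h : A.length ≤ k) :
    gl (A ++ B) k = gl B (k - A.length) := by
  obtain ⟨n, rfl⟩ := Int.eq_ofNat_of_zero_le (by omega : 0 ≤ k)
  obtain ⟨t, rfl⟩ := Nat.exists_eq_add_of_le (by omega : A.length ≤ n)
  rw [gl_nat, List.getElem?_append_right (by omega)]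
  rw [show ((A.length + t : ℕ) : ℤ) - A.length = (t : ℤ) by push_cast; ring, gl_nat]
  simp

theorem gl_seg {α : Type} (ρ : ℤ → α × Bool) (i : ℤ) (n : ℕ) (k : ℤ) (h0 : 0 ≤ k) (h1 : k < n) :
    gl (seg ρ i n) k = some (ρ (i + k)) := by
  obtain ⟨t, rfl⟩ := Int.eq_ofNat_of_zero_le h0
  rw [gl_nat]
  have h2 : t < n := by exact_mod_cast h1
  simp [seg, h2]

theorem gl_take {α : Type} (Z : List (α × Bool)) (n : ℕ) (k : ℤ) (h : k < n) :
    gl (Z.take n) k = gl Z k := by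
  by_cases hk : k < 0
  · rw [gl_neg _ _ hk, gl_neg _ _ hk]
  · obtain ⟨t, rfl⟩ := Int.eq_ofNat_of_zero_le (by omega : 0 ≤ k)
    rw [gl_nat, gl_nat, List.getElem?_take_of_lt (by omega)]

theorem gl_drop {α : Type} (Z : List (α × Bool)) (n : ℕ) (k : ℤ) (h : 0 ≤ k) :
    gl (Z.drop n) k = gl Z (k + n) := by
  obtain ⟨t, rfl⟩ := Int.eq_ofNat_of_zero_le h
  rw [gl_nat, show ((t : ℤ) + n) = ((t + n : ℕ) : ℤ) by push_cast; ring, gl_nat,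
    List.getElem?_drop, add_comm]

/-- Reducedness in terms of `gl`. -/
def RedG {α : Type} (z : ℤ → Option (α × Bool)) : Prop :=
  ∀ k l l', z k = some l → z (k + 1) = some l' → l' ≠ bar l

theorem isReduced_iff_redG {α : Type} (Z : List (α × Bool)) : FreeGroup.IsReduced Z ↔ RedG (gl Z) := by
  unfold FreeGroup.IsReduced RedG
  rw [List.isChain_iff_getElem]
  constructor
  · intro h k l l' h1 h2 h3
    have hb := gl_some_bound h1
    have hb2 := gl_some_bound h2
    obtain ⟨t, rfl⟩ := Int.eq_ofNat_of_zero_le hb.1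
    have := h t (by omega)
    rw [gl_nat] at h1
    rw [show (t : ℤ) + 1 = ((t + 1 : ℕ) : ℤ) by push_cast; ring, gl_nat] at h2
    obtain ⟨_, e1⟩ := List.getElem?_eq_some_iff.1 h1
    obtain ⟨_, e2⟩ := List.getElem?_eq_some_iff.1 h2
    rw [e1, e2, h3] at this
    simp [bar] at this
  · intro h i hi h1
    have := h i Z[i] Z[i+1] (by rw [gl_nat]; simp)
      (by rw [show (i : ℤ) + 1 = ((i + 1 : ℕ) : ℤ) by push_cast; ring, gl_nat]; simp)
    by_contra h2
    apply this
    unfold bar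
    ext
    · exact h1.symm
    · cases h3 : Z[i].2 <;> cases h4 : Z[i+1].2 <;> simp_all

/-- Reading of `ρ` on `[a,b)`. -/
def Reads {α : Type} (z : ℤ → Option (α × Bool)) (ρ : ℤ → α × Bool) (a b : ℤ) : Prop :=
  ∀ k, a ≤ k → k < b → z k = some (ρ k)

/-- Prefix element. -/
def pre {α : Type} (Z : List (α × Bool)) (a : ℤ) : FreeGroup α := mk (Z.take a.toNat)
/-- Suffix element. -/
def suf {α : Type} (Z : List (α × Bool)) (a : ℤ) : FreeGroup α := mk (Z.drop a.toNat)

theorem pre_suf {α : Type} (Z : List (α × Bool)) (a : ℤ) : pre Z a * suf Z a = mk Z := by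
  simp [pre, suf]

theorem pre_succ {α : Type} (Z : List (α × Bool)) (k : ℤ) (l : α × Bool) (h : gl Z k = some l) :
    pre Z (k + 1) = pre Z k * mk [l] := by
  have hb := gl_some_bound h
  obtain ⟨t, rfl⟩ := Int.eq_ofNat_of_zero_le hb.1
  rw [gl_nat] at h
  unfold pre
  rw [show ((t : ℤ) + 1).toNat = t + 1 by omega, Int.toNat_natCast, List.take_add_one, h,
    ← FreeGroup.mul_mk]
  rfl

theorem pre_E {α : Type} (Z : List (α × Bool)) (ρ : ℤ → α × Bool) (a b : ℤ) (hab : a ≤ b)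
    (h : Reads (gl Z) ρ a b) : pre Z a * E ρ a b = pre Z b := by
  obtain ⟨n, rfl⟩ := Int.le.dest hab
  clear hab
  induction n with
  | zero => simp [E_self]
  | succ n ih =>
    have h1 := ih (fun k h1 h2 => h k h1 (by push_cast; omega))
    have h2 := pre_succ Z (a + n) _ (h (a + n) (by omega) (by push_cast; omega))
    rw [show a + ((n + 1 : ℕ) : ℤ) = a + n + 1 by push_cast; ring, h2, ← h1, ← E_succ, mul_assoc,
      E_mul]

theorem E_suf {α : Type} (Z : List (α × Bool)) (ρ : ℤ → α × Bool) (a b : ℤ) (hab : a ≤ b)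
    (h : Reads (gl Z) ρ a b) : E ρ a b * suf Z b = suf Z a := by
  have h1 := pre_E Z ρ a b hab h
  have h2 := pre_suf Z a
  have h3 := pre_suf Z b
  rw [← h1, ← h2, mul_assoc] at h3
  exact mul_left_cancel h3

theorem norm_pre {α : Type} [DecidableEq α] (Z : List (α × Bool)) (a : ℤ) (h : 0 ≤ a) :
    ((pre Z a).norm : ℤ) ≤ a := by
  have := FreeGroup.norm_mk_le (L₁ := Z.take a.toNat)
  unfold pre
  simp only [List.length_take] at this
  omega

theorem norm_suf {α : Type} [DecidableEq α] (Z : List (α × Bool)) (a : ℤ) (h : 0 ≤ a)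
    (h' : a ≤ Z.length) : ((suf Z a).norm : ℤ) ≤ Z.length - a := by
  have := FreeGroup.norm_mk_le (L₁ := Z.drop a.toNat)
  unfold suf
  simp only [List.length_drop] at this
  omega

theorem norm_mid {α : Type} [DecidableEq α] (Z : List (α × Bool)) (a b : ℤ) (h : 0 ≤ a)
    (h' : a ≤ b) : (((pre Z a)⁻¹ * pre Z b).norm : ℤ) ≤ b - a := by
  have e : pre Z b = pre Z a * mk ((Z.drop a.toNat).take (b.toNat - a.toNat)) := by
    unfold pre
    rw [FreeGroup.mul_mk]
    congr 1
    rw [← List.take_add]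
    congr 1
    omega
  rw [e, inv_mul_cancel_left]
  have := FreeGroup.norm_mk_le (L₁ := (Z.drop a.toNat).take (b.toNat - a.toNat))
  simp only [List.length_take] at this
  omega

end SmallCanc

namespace SmallCanc
open FreeGroup

/-- Small cancellation hypotheses on a family of periodic bi-infinite words. -/
structure SC {α : Type} (Ω : (ℤ → α × Bool) → ℤ → Prop) : Prop where
  shift : ∀ ρ π c, Ω ρ π → Ω (fun k => ρ (k + c)) π
  inv : ∀ ρ π, Ω ρ π → Ω (rev 0 ρ) π
  per : ∀ ρ π, Ω ρ π → ∀ k, ρ (k + π) = ρ k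
  red : ∀ ρ π, Ω ρ π → ∀ k, ρ (k + 1) ≠ bar (ρ k)
  big : ∀ ρ π, Ω ρ π → 100 ≤ π
  small : ∀ ρ π ρ' π' i j, Ω ρ π → Ω ρ' π' → (∀ k, i ≤ k → k < j → ρ k = ρ' k) →
    π ≤ 20 * (j - i) → ρ = ρ' ∧ π = π'

theorem SC.rev {α : Type} {Ω : (ℤ → α × Bool) → ℤ → Prop} (h : SC Ω) (ρ π) (c : ℤ) (hρ : Ω ρ π) :
    Ω (rev c ρ) π := by
  have := h.shift _ _ (-c) (h.inv _ _ hρ)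
  convert this using 1
  funext k
  simp only [SmallCanc.rev]
  congr 2
  ring

theorem SC.perk {α : Type} {Ω : (ℤ → α × Bool) → ℤ → Prop} (h : SC Ω) {ρ π} (hρ : Ω ρ π) (n k : ℤ) :
    ρ (k + n * π) = ρ k := by
  induction n using Int.induction_on with
  | zero => simp
  | succ n ih =>
    rw [show k + ((n : ℤ) + 1) * π = (k + n * π) + π by ring, h.per _ _ hρ, ih]
  | pred n ih =>
    rw [← ih, ← h.per _ _ hρ (k + (-(n : ℤ) - 1) * π)]
    congr 1
    ring

/-- Multiplication by conjugates of powers of relators. -/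
def Edge {α : Type} (Ω : (ℤ → α × Bool) → ℤ → Prop) (y y' : FreeGroup α) : Prop :=
  ∃ P Q ρ π i j k, Ω ρ π ∧ y = P * E ρ i j * Q ∧ y' = P * E ρ i (j + k * π) * Q

theorem Edge.symm {α : Type} {Ω : (ℤ → α × Bool) → ℤ → Prop} {y y' : FreeGroup α}
    (h : Edge Ω y y') : Edge Ω y' y := by
  obtain ⟨P, Q, ρ, π, i, j, k, hρ, h1, h2⟩ := h
  refine ⟨P, Q, ρ, π, i, j + k * π, -k, hρ, h2, ?_⟩
  rw [h1]
  congr 3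
  ring

theorem gl3 {α : Type} (A B : List (α × Bool)) (ρ : ℤ → α × Bool) (i : ℤ) (n : ℕ) :
    (∀ k : ℤ, k < A.length → gl (A ++ seg ρ i n ++ B) k = gl A k) ∧
    (∀ k : ℤ, A.length ≤ k → k < A.length + n →
      gl (A ++ seg ρ i n ++ B) k = some (ρ (i + (k - A.length)))) ∧
    (∀ k : ℤ, A.length + n ≤ k → gl (A ++ seg ρ i n ++ B) k = gl B (k - A.length - n)) := by
  refine ⟨?_, ?_, ?_⟩
  · intro k hk
    rw [List.append_assoc, gl_append_left _ _ _ hk]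
  · intro k h1 h2
    rw [List.append_assoc, gl_append_right _ _ _ h1, gl_append_left _ _ _ (by rw [seg_length]; omega),
      gl_seg _ _ _ _ (by omega) (by omega)]
  · intro k h1
    rw [gl_append_right _ _ _ (by rw [List.length_append, seg_length]; push_cast; omega)]
    congr 1
    rw [List.length_append, seg_length]; push_cast; ring

theorem red3 {α : Type} (A B : List (α × Bool)) (ρ : ℤ → α × Bool) (i : ℤ) (n : ℕ) (hn : 0 < n)
    (hA : RedG (gl A)) (hB : RedG (gl B)) (hρ : ∀ k, ρ (k + 1) ≠ bar (ρ k))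
    (hl : gl A (A.length - 1) ≠ some (bar (ρ i)))
    (hr : gl B 0 ≠ some (bar (ρ (i + n - 1)))) : RedG (gl (A ++ seg ρ i n ++ B)) := by
  obtain ⟨h1, h2, h3⟩ := gl3 A B ρ i n
  intro k l l' e1 e2 e3
  rcases lt_or_ge (k + 1) A.length with hk | hk
  · rw [h1 _ (by omega)] at e1
    rw [h1 _ (by omega)] at e2
    exact hA _ _ _ e1 e2 e3
  rcases lt_or_ge (k + 1) (A.length + n) with hk2 | hk2
  · rw [h2 _ hk hk2] at e2
    rcases eq_or_lt_of_le hk with hk3 | hk3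
    · rw [h1 _ (by omega)] at e1
      apply hl
      rw [hk3, add_sub_cancel_right, e1]
      rw [← hk3, sub_self, add_zero] at e2
      have : ρ i = l' := by simpa using e2
      rw [this, e3, bar_bar]
    · rw [h2 _ (by omega) (by omega)] at e1
      have e1' := Option.some.inj e1
      have e2' := Option.some.inj e2
      apply hρ (i + (k - A.length))
      rw [e1', ← e3, ← e2']
      congr 1
      ring
  · rw [h3 _ hk2] at e2
    rcases eq_or_lt_of_le hk2 with hk3 | hk3
    · rw [h2 _ (by omega) (by omega)] at e1
      have e1' := Option.some.inj e1
      apply hr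
      rw [show (0 : ℤ) = k + 1 - A.length - n by omega, e2, e3, ← e1']
      congr 3
      omega
    · rw [h3 _ (by omega)] at e1
      apply hB _ _ _ e1 _ e3
      rw [← e2]
      congr 1
      ring

theorem toWord3 {α : Type} [DecidableEq α] (A B : List (α × Bool)) (ρ : ℤ → α × Bool) (i : ℤ) (n : ℕ)
    (hn : 0 < n)
    (hA : RedG (gl A)) (hB : RedG (gl B)) (hρ : ∀ k, ρ (k + 1) ≠ bar (ρ k))
    (hl : gl A (A.length - 1) ≠ some (bar (ρ i)))
    (hr : gl B 0 ≠ some (bar (ρ (i + n - 1)))) :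
    (mk A * E ρ i (i + n) * mk B).toWord = A ++ seg ρ i n ++ B := by
  rw [E_seg, FreeGroup.mul_mk, FreeGroup.mul_mk, FreeGroup.toWord_mk]
  exact ((isReduced_iff_redG _).2 (red3 A B ρ i n hn hA hB hρ hl hr)).reduce_eq

theorem redG_toWord {α : Type} [DecidableEq α] (y : FreeGroup α) : RedG (gl y.toWord) :=
  (isReduced_iff_redG _).1 FreeGroup.isReduced_toWord

theorem norm3 {α : Type} [DecidableEq α] (P Q : FreeGroup α) (ρ : ℤ → α × Bool) (i j : ℤ)
    (hij : i ≠ j) (hρ : ∀ k, ρ (k + 1) ≠ bar (ρ k))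
    (h1 : gl P.toWord (P.toWord.length - 1) ≠ some (bar (ρ i)))
    (h2 : gl P.toWord (P.toWord.length - 1) ≠ some (ρ (i - 1)))
    (h3 : gl Q.toWord 0 ≠ some (bar (ρ (j - 1))))
    (h4 : gl Q.toWord 0 ≠ some (ρ j)) :
    ((P * E ρ i j * Q).norm : ℤ) = P.norm + |j - i| + Q.norm := by
  rcases lt_or_gt_of_ne hij with h | h
  · obtain ⟨n, rfl⟩ := Int.le.dest h.le
    have := toWord3 P.toWord Q.toWord ρ i n (by omega) (redG_toWord _) (redG_toWord _) hρ h1 h3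
    rw [FreeGroup.mk_toWord, FreeGroup.mk_toWord] at this
    unfold FreeGroup.norm
    rw [this, List.length_append, List.length_append, seg_length, abs_of_nonneg (by omega)]
    push_cast
    ring
  · obtain ⟨n, rfl⟩ := Int.le.dest h.le
    have := toWord3 P.toWord Q.toWord (rev 0 ρ) (0 - (j + n)) n (by omega)
      (redG_toWord _) (redG_toWord _) ?_ ?_ ?_
    · rw [FreeGroup.mk_toWord, FreeGroup.mk_toWord, show 0 - (j + (n : ℤ)) + n = 0 - j by ring,
        ← E_rev] at this
      unfold FreeGroup.norm
      rw [this, List.length_append, List.length_append, seg_length, abs_of_nonpos (by omega)]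
      push_cast
      ring
    · intro k hk
      simp only [rev] at hk
      rw [bar_bar] at hk
      apply hρ (0 - 1 - (k + 1))
      rw [hk]
      congr 1
      ring
    · simp only [rev, bar_bar]
      rw [show 0 - 1 - (0 - (j + (n : ℤ))) = j + n - 1 by ring]
      exact h2
    · simp only [rev, bar_bar]
      convert h4 using 4
      ring

theorem split_last {α : Type} [DecidableEq α] (P : FreeGroup α) (l : α × Bool)
    (h : gl P.toWord (P.toWord.length - 1) = some l) :
    ∃ P0 : FreeGroup α, P = P0 * mk [l] ∧ P0.norm < P.norm := by
  have hb := gl_some_bound h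
  have h1 := pre_succ _ _ _ h
  refine ⟨pre P.toWord (P.toWord.length - 1), ?_, ?_⟩
  · rw [← h1, sub_add_cancel]
    simp [pre, FreeGroup.mk_toWord]
  · have := norm_pre P.toWord (P.toWord.length - 1) hb.1
    unfold FreeGroup.norm at *
    omega

theorem split_head {α : Type} [DecidableEq α] (Q : FreeGroup α) (l : α × Bool)
    (h : gl Q.toWord 0 = some l) :
    ∃ Q0 : FreeGroup α, Q = mk [l] * Q0 ∧ Q0.norm < Q.norm := by
  have hb := gl_some_bound h
  have h1 := pre_succ _ _ _ h
  refine ⟨suf Q.toWord 1, ?_, ?_⟩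
  · have h2 : pre Q.toWord 0 = 1 := by simp [pre, FreeGroup.one_eq_mk]
    rw [h2, one_mul, zero_add] at h1
    rw [← h1, pre_suf, FreeGroup.mk_toWord]
  · have := norm_suf Q.toWord 1 (by omega) (by omega)
    unfold FreeGroup.norm at *
    omega

theorem ENF {α : Type} [DecidableEq α] {Ω : (ℤ → α × Bool) → ℤ → Prop} (hΩ : SC Ω)
    (y y' : FreeGroup α) (he : Edge Ω y y') (hne : y ≠ y') (hle : y'.norm ≤ y.norm) :
    ∃ ρ π a b k, Ω ρ π ∧ 0 ≤ a ∧ a < b ∧ Reads (gl y.toWord) ρ a b ∧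
      gl y.toWord (a - 1) ≠ some (ρ (a - 1)) ∧ gl y.toWord b ≠ some (ρ b) ∧
      y' = pre y.toWord a * E ρ a (b + k * π) * suf y.toWord b ∧ |b - a + k * π| ≤ b - a ∧ k ≠ 0 := by
  classical
  have hex : ∃ n : ℕ, ∃ P Q ρ π i j k, Ω ρ π ∧ y = P * E ρ i j * Q ∧
      y' = P * E ρ i (j + k * π) * Q ∧ P.norm + Q.norm = n := by
    obtain ⟨P, Q, ρ, π, i, j, k, hρ, h1, h2⟩ := he
    exact ⟨_, P, Q, ρ, π, i, j, k, hρ, h1, h2, rfl⟩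
  have hmin := fun m => @Nat.find_min _ _ hex m
  obtain ⟨P, Q, ρ, π, i, j, k, hρ, h1, h2, hn⟩ := Nat.find_spec hex
  rw [← hn] at hmin
  clear hn
  -- WLOG i ≤ j
  obtain ⟨ρ, i, j, k, hij, hρ, h1, h2⟩ : ∃ ρ i j k, i ≤ j ∧ Ω ρ π ∧ y = P * E ρ i j * Q ∧
      y' = P * E ρ i (j + k * π) * Q := by
    rcases le_total i j with h | h
    · exact ⟨ρ, i, j, k, h, hρ, h1, h2⟩
    · refine ⟨SmallCanc.rev 0 ρ, 0 - i, 0 - j, -k, by omega, hΩ.inv _ _ hρ, ?_, ?_⟩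
      · rw [← E_rev]; exact h1
      · rw [show 0 - j + -k * π = 0 - (j + k * π) by ring, ← E_rev]; exact h2
  have hm : ∀ P' Q' i' j', y = P' * E ρ i' j' * Q' → y' = P' * E ρ i' (j' + k * π) * Q' →
      P'.norm + Q'.norm < P.norm + Q.norm → False := by
    intro P' Q' i' j' e1 e2 e3
    exact hmin _ e3 ⟨P', Q', ρ, π, i', j', k, hρ, e1, e2, rfl⟩
  have hk : k ≠ 0 := by
    rintro rfl
    apply hne
    rw [h1, h2]
    simp
  have hπ := hΩ.big _ _ hρ
  have c1 : gl P.toWord (P.toWord.length - 1) ≠ some (bar (ρ i)) := by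
    intro h
    obtain ⟨P0, e, hP0⟩ := split_last _ _ h
    have e' : P = P0 * E ρ (i + 1) i := by
      rw [e, mk_bar, ← E_succ, E_inv]
    refine hm P0 Q (i + 1) j ?_ ?_ (by omega)
    · rw [h1, e', mul_assoc P0, E_mul]
    · rw [h2, e', mul_assoc P0, E_mul]
  have c2 : gl P.toWord (P.toWord.length - 1) ≠ some (ρ (i - 1)) := by
    intro h
    obtain ⟨P0, e, hP0⟩ := split_last _ _ h
    have e' : P = P0 * E ρ (i - 1) i := by
      rw [e, ← E_succ, sub_add_cancel]
    refine hm P0 Q (i - 1) j ?_ ?_ (by omega)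
    · rw [h1, e', mul_assoc P0, E_mul]
    · rw [h2, e', mul_assoc P0, E_mul]
  have c3 : gl Q.toWord 0 ≠ some (bar (ρ (j - 1))) := by
    intro h
    obtain ⟨Q0, e, hQ0⟩ := split_head _ _ h
    have e' : mk [bar (ρ (j - 1))] = E ρ j (j - 1) := by
      rw [mk_bar, ← E_succ, E_inv, sub_add_cancel]
    have ee2 : mk [bar (ρ (j - 1))] = E ρ (j + k * π) (j - 1 + k * π) := by
      rw [e', E_per _ _ (hΩ.per _ _ hρ)]
    refine hm P Q0 i (j - 1) ?_ ?_ (by omega)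
    · rw [h1, e, e', ← mul_assoc, mul_assoc P, E_mul]
    · rw [h2, e, ee2, ← mul_assoc, mul_assoc P, E_mul]
  have c4 : gl Q.toWord 0 ≠ some (ρ j) := by
    intro h
    obtain ⟨Q0, e, hQ0⟩ := split_head _ _ h
    have e' : mk [ρ j] = E ρ j (j + 1) := by
      rw [← E_succ]
    have ee2 : mk [ρ j] = E ρ (j + k * π) (j + 1 + k * π) := by
      rw [e', E_per _ _ (hΩ.per _ _ hρ)]
    refine hm P Q0 i (j + 1) ?_ ?_ (by omega)
    · rw [h1, e, e', ← mul_assoc, mul_assoc P, E_mul]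
    · rw [h2, e, ee2, ← mul_assoc, mul_assoc P, E_mul]
  have hred := hΩ.red _ _ hρ
  have n2 : i ≠ j + k * π → (y'.norm : ℤ) = P.norm + |j + k * π - i| + Q.norm := by
    intro h
    rw [h2]
    apply norm3 _ _ _ _ _ h hred c1 c2
    · rw [show j + k * π - 1 = (j - 1) + k * π by ring, hΩ.perk hρ]; exact c3
    · rw [hΩ.perk hρ]; exact c4
  have hlt : i < j := by
    rcases eq_or_lt_of_le hij with h | h
    · exfalso
      subst h
      rw [E_self, mul_one] at h1
      have hkp : k * π ≠ 0 := mul_ne_zero hk (by omega)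
      have := n2 (by omega)
      have h5 := FreeGroup.norm_mul_le P Q
      rw [← h1] at h5
      rw [show i + k * π - i = k * π by ring] at this
      have := abs_pos.2 hkp
      omega
    · exact h
  obtain ⟨n, rfl⟩ := Int.le.dest hij
  have hw := toWord3 P.toWord Q.toWord ρ i n (by omega) (redG_toWord _) (redG_toWord _) hred c1 c3
  rw [FreeGroup.mk_toWord, FreeGroup.mk_toWord, ← h1] at hw
  obtain ⟨g1, g2, g3⟩ := gl3 P.toWord Q.toWord ρ i n
  rw [← hw] at g1 g2 g3
  set p : ℤ := (P.toWord.length : ℤ) with hp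
  refine ⟨fun t => ρ (t + (i - p)), π, p, p + n, k, hΩ.shift _ _ _ hρ, by omega, by omega, ?_, ?_, ?_, ?_,
    ?_, hk⟩
  · intro t ht1 ht2
    rw [g2 t ht1 ht2]
    congr 2
    ring
  · rw [g1 _ (by omega)]
    convert c2 using 3
    ring_nf
  · rw [g3 _ (by omega), show p + n - p - (n : ℤ) = 0 by ring]
    convert c4 using 3
    ring_nf
  · rw [E_shift, h2]
    have e1 : pre y.toWord p = P := by
      unfold pre
      rw [hw, hp, Int.toNat_natCast, List.append_assoc, List.take_left, FreeGroup.mk_toWord]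
    have e2 : suf y.toWord (p + n) = Q := by
      unfold suf
      rw [hw, hp, show ((P.toWord.length : ℤ) + n).toNat = (P.toWord ++ seg ρ i n).length by
        rw [List.length_append, seg_length]; omega, List.drop_left, FreeGroup.mk_toWord]
    rw [e1, e2]
    congr 3
    · ring
    · ring
  · rw [show p + n - p = (n : ℤ) by ring]
    by_cases h : i = i + n + k * π
    · rw [show (n : ℤ) + k * π = 0 by linarith]
      simp
    · have := n2 h
      have h5 : (y.norm : ℤ) = P.norm + n + Q.norm := by
        unfold FreeGroup.norm
        rw [hw, List.length_append, List.length_append, seg_length]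
        push_cast
        ring
      rw [show i + n + k * π - i = n + k * π by ring] at this
      omega

end SmallCanc

namespace SmallCanc
open FreeGroup

theorem enlarge {α : Type} {Ω : (ℤ → α × Bool) → ℤ → Prop} (hΩ : SC Ω) (Z : List (α × Bool))
    {ρ π} (hρ : Ω ρ π) (a0 b0 a b k : ℤ) (hr : Reads (gl Z) ρ a0 b0) (h1 : a0 ≤ a) (h2 : a ≤ b0)
    (h3 : a0 ≤ b) (h4 : b ≤ b0) :
    pre Z a * E ρ a (b + k * π) * suf Z b = pre Z a0 * E ρ a0 (b0 + k * π) * suf Z b0 := by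
  rw [← pre_E Z ρ a0 a h1 (fun t ht1 ht2 => hr t ht1 (by omega)),
    ← E_suf Z ρ b b0 h4 (fun t ht1 ht2 => hr t (by omega) ht2),
    ← E_per ρ π (hΩ.per _ _ hρ) k b b0, ← mul_assoc, mul_assoc _ (E ρ a0 a), E_mul,
    mul_assoc _ (E ρ a0 _), E_mul]

theorem edge_flips {α : Type} {Ω : (ℤ → α × Bool) → ℤ → Prop} (P Q : FreeGroup α)
    {ρ π} (hρ : Ω ρ π) (i j k k' : ℤ) :
    Edge Ω (P * E ρ i (j + k * π) * Q) (P * E ρ i (j + k' * π) * Q) := by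
  refine ⟨P, Q, ρ, π, i, j + k * π, k' - k, hρ, rfl, ?_⟩
  congr 3
  ring

theorem norm_chain {α : Type} [DecidableEq α] (A B C D F : FreeGroup α) :
    (A * B * C * D * F).norm ≤ A.norm + B.norm + C.norm + D.norm + F.norm := by
  have h1 := FreeGroup.norm_mul_le (A * B * C * D) F
  have h2 := FreeGroup.norm_mul_le (A * B * C) D
  have h3 := FreeGroup.norm_mul_le (A * B) C
  have h4 := FreeGroup.norm_mul_le A B
  omega

theorem reads_le {α : Type} {Z : List (α × Bool)} {ρ : ℤ → α × Bool} {a b : ℤ}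
    (h : Reads (gl Z) ρ a b) (hab : a < b) : 0 ≤ a ∧ b ≤ Z.length := by
  have h1 := gl_some_bound (h a le_rfl hab)
  have h2 := gl_some_bound (h (b - 1) (by omega) (by omega))
  omega

theorem square_left {α : Type} [DecidableEq α] {Ω : (ℤ → α × Bool) → ℤ → Prop}
    (Z : List (α × Bool)) {ρ π ρ' π'} (hρ : Ω ρ π) (hρ' : Ω ρ' π')
    (a b k a' b' k' : ℤ) (h0 : 0 ≤ a) (hab : a ≤ b) (hba : b ≤ a') (hab' : a' ≤ b') (hL : b' ≤ Z.length)
    (hr : Reads (gl Z) ρ a b) (hr' : Reads (gl Z) ρ' a' b') :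
    ∃ w, Edge Ω (pre Z a * E ρ a (b + k * π) * suf Z b) w ∧
      Edge Ω w (pre Z a' * E ρ' a' (b' + k' * π') * suf Z b') ∧
      (w.norm : ℤ) ≤ a + |b - a + k * π| + (a' - b) + |b' - a' + k' * π'| + (Z.length - b') := by
  set M := (pre Z b)⁻¹ * pre Z a' with hM
  have e1 : suf Z b = M * E ρ' a' b' * suf Z b' := by
    have h1 := pre_suf Z b
    have h2 := pre_suf Z a'
    rw [mul_assoc, E_suf Z ρ' a' b' hab' hr', hM, mul_assoc, h2, ← h1]
    group
  have e2 : pre Z a' = pre Z a * E ρ a b * M := by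
    rw [pre_E Z ρ a b hab hr, hM]
    group
  refine ⟨pre Z a * E ρ a (b + k * π) * M * E ρ' a' (b' + k' * π') * suf Z b', ?_, ?_, ?_⟩
  · rw [e1]
    have := edge_flips (Ω := Ω) (pre Z a * E ρ a (b + k * π) * M) (suf Z b') hρ' a' b' 0 k'
    simpa [mul_assoc] using this
  · have := edge_flips (Ω := Ω) (pre Z a) (M * E ρ' a' (b' + k' * π') * suf Z b') hρ a b k 0
    rw [e2]
    simpa [mul_assoc] using this
  · have h1 := norm_chain (pre Z a) (E ρ a (b + k * π)) M (E ρ' a' (b' + k' * π')) (suf Z b')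
    have h2 := norm_pre Z a h0
    have h3 := norm_E_le ρ a (b + k * π)
    have h4 := norm_mid Z b a' (by omega) hba
    have h5 := norm_E_le ρ' a' (b' + k' * π')
    have h6 := norm_suf Z b' (by omega) hL
    rw [show b + k * π - a = b - a + k * π by ring] at h3
    rw [show b' + k' * π' - a' = b' - a' + k' * π' by ring] at h5
    rw [← hM] at h4
    omega

/-- A strong reduction step. -/
def Strong {α : Type} [DecidableEq α] (Ω : (ℤ → α × Bool) → ℤ → Prop) (y z : FreeGroup α) : Prop :=
  ∃ ρ π a b, Ω ρ π ∧ 0 ≤ a ∧ Reads (gl y.toWord) ρ a b ∧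
      gl y.toWord (a - 1) ≠ some (ρ (a - 1)) ∧ gl y.toWord b ≠ some (ρ b) ∧ 3 * π ≤ 4 * (b - a) ∧
      z = pre y.toWord a * E ρ a (b - π) * suf y.toWord b

theorem square {α : Type} [DecidableEq α] {Ω : (ℤ → α × Bool) → ℤ → Prop} (hΩ : SC Ω)
    (y z1 z2 : FreeGroup α) (hs : Strong Ω y z2) {ρ π} (hρ : Ω ρ π) (a b k : ℤ) (h0 : 0 ≤ a)
    (hab : a < b) (hr : Reads (gl y.toWord) ρ a b) (hk : |b - a + k * π| ≤ b - a) (hk0 : k ≠ 0)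
    (hz : z1 = pre y.toWord a * E ρ a (b + k * π) * suf y.toWord b) :
    Edge Ω z1 z2 ∨ ∃ w, Edge Ω z1 w ∧ Edge Ω w z2 ∧ w.norm < y.norm := by
  obtain ⟨ρ', π', a', b', hρ', h0', hr', -, -, hst, hz2⟩ := hs
  have hp := hΩ.big _ _ hρ
  have hp' := hΩ.big _ _ hρ'
  rw [show b' - π' = b' + (-1) * π' by ring] at hz2
  have hL := (reads_le hr hab).2
  have hL' := (reads_le hr' (by omega)).2
  have hnorm : y.norm = y.toWord.length := rfl
  have hπ : π ≤ 2 * (b - a) := by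
    have h1 := (abs_le.1 hk).1
    have h2 := (abs_le.1 hk).2
    rcases lt_or_gt_of_ne hk0 with h | h
    · have : k * π ≤ -1 * π := mul_le_mul_of_nonneg_right (by omega) (by omega)
      omega
    · have : 1 * π ≤ k * π := mul_le_mul_of_nonneg_right (by omega) (by omega)
      omega
  have habs : |b' - a' + -1 * π'| * 2 ≤ 2 * (b' - a') - π' := by
    rcases abs_cases (b' - a' + -1 * π') with h | h <;> omega
  -- same line
  have same : ρ = ρ' → π = π' → max a a' ≤ min b b' → Edge Ω z1 z2 := by
    rintro rfl rfl h
    have hu : Reads (gl y.toWord) ρ (min a a') (max b b') := by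
      intro t h1 h2
      by_cases h3 : a ≤ t ∧ t < b
      · exact hr t h3.1 h3.2
      · exact hr' t (by omega) (by omega)
    rw [hz, hz2, enlarge hΩ _ hρ (min a a') (max b b') a b k hu (by omega) (by omega) (by omega)
      (by omega), enlarge hΩ _ hρ (min a a') (max b b') a' b' (-1) hu (by omega) (by omega) (by omega)
      (by omega)]
    exact edge_flips _ _ hρ _ _ _ _
  by_cases hov : π ≤ 20 * (min b b' - max a a')
  · left
    obtain ⟨h1, h2⟩ := hΩ.small ρ π ρ' π' (max a a') (min b b') hρ hρ' (fun t ht1 ht2 => by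
      have := (hr t (by omega) (by omega)).symm.trans (hr' t (by omega) (by omega))
      exact Option.some.inj this) hov
    exact same h1 h2 (by omega)
  by_cases hov' : π' ≤ 20 * (min b b' - max a a')
  · left
    obtain ⟨h1, h2⟩ := hΩ.small ρ' π' ρ π (max a a') (min b b') hρ' hρ (fun t ht1 ht2 => by
      have := (hr' t (by omega) (by omega)).symm.trans (hr t (by omega) (by omega))
      exact Option.some.inj this) hov'
    exact same h1.symm h2.symm (by omega)
  right
  by_cases hside : a < a'
  · -- trim on the right
    have hb : b < b' := by omega
    set b1 := min b a' with hb1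
    have hz' : z1 = pre y.toWord a * E ρ a (b1 + k * π) * suf y.toWord b1 := by
      rw [hz, enlarge hΩ _ hρ a b a b1 k hr (by omega) (by omega) (by omega) (by omega)]
    obtain ⟨w, w1, w2, w3⟩ := square_left (Ω := Ω) y.toWord hρ hρ' a b1 k a' b' (-1) h0 (by omega) (by omega)
      (by omega) hL' (fun t ht1 ht2 => hr t ht1 (by omega)) hr'
    refine ⟨w, by rw [hz']; exact w1, by rw [hz2]; exact w2, ?_⟩
    have h5 : |b1 - a + k * π| ≤ |b - a + k * π| + (b - b1) := by
      rcases abs_cases (b1 - a + k * π) with h | h <;>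
      rcases abs_cases (b - a + k * π) with h' | h' <;> omega
    omega
  · have hb : b' < b := by omega
    set a1 := max a b' with ha1
    have hz' : z1 = pre y.toWord a1 * E ρ a1 (b + k * π) * suf y.toWord b := by
      rw [hz, enlarge hΩ _ hρ a b a1 b k hr (by omega) (by omega) (by omega) (by omega)]
    obtain ⟨w, w1, w2, w3⟩ := square_left (Ω := Ω) y.toWord hρ' hρ a' b' (-1) a1 b k h0' (by omega) (by omega)
      (by omega) hL hr' (fun t ht1 ht2 => hr t (by omega) (by omega))
    refine ⟨w, by rw [hz']; exact w2.symm, by rw [hz2]; exact w1.symm, ?_⟩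
    have h5 : |b - a1 + k * π| ≤ |b - a + k * π| + (a1 - a) := by
      rcases abs_cases (b - a1 + k * π) with h | h <;>
      rcases abs_cases (b - a + k * π) with h' | h' <;> omega
    omega

theorem Strong.norm_lt {α : Type} [DecidableEq α] {Ω : (ℤ → α × Bool) → ℤ → Prop} (hΩ : SC Ω)
    {y z : FreeGroup α} (h : Strong Ω y z) : z.norm < y.norm := by
  obtain ⟨ρ, π, a, b, hρ, h0, hr, -, -, hst, hz⟩ := h
  have hp := hΩ.big _ _ hρ
  have hL := (reads_le hr (by omega)).2
  have hnorm : y.norm = y.toWord.length := rfl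
  have h1 := FreeGroup.norm_mul_le (pre y.toWord a * E ρ a (b - π)) (suf y.toWord b)
  have h2 := FreeGroup.norm_mul_le (pre y.toWord a) (E ρ a (b - π))
  have h3 := norm_pre y.toWord a h0
  have h4 := norm_E_le ρ a (b - π)
  have h5 := norm_suf y.toWord b (by omega) hL
  rw [← hz] at h1
  rcases abs_cases (b - π - a) with h | h <;> omega

/-- No long reading. -/
def Irr {α : Type} (Ω : (ℤ → α × Bool) → ℤ → Prop) (z : ℤ → Option (α × Bool)) : Prop :=
  ∀ ρ π a b, Ω ρ π → Reads z ρ a b → 4 * (b - a) < 3 * π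

theorem exists_max {α : Type} (Z : List (α × Bool)) (ρ : ℤ → α × Bool) (a b : ℤ) (hab : a < b)
    (hr : Reads (gl Z) ρ a b) : ∃ a' b', a' ≤ a ∧ b ≤ b' ∧ Reads (gl Z) ρ a' b' ∧
      gl Z (a' - 1) ≠ some (ρ (a' - 1)) ∧ gl Z b' ≠ some (ρ b') := by
  have hL := reads_le hr hab
  have : ∀ n : ℕ, ∀ a b, a < b → Reads (gl Z) ρ a b → (a + (Z.length - b)).toNat = n →
     ∃ a' b', a' ≤ a ∧ b ≤ b' ∧ Reads (gl Z) ρ a' b' ∧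
      gl Z (a' - 1) ≠ some (ρ (a' - 1)) ∧ gl Z b' ≠ some (ρ b') := by
    intro n
    induction n using Nat.strong_induction_on with
    | _ n ih =>
    intro a b hab hr hn
    have hL := reads_le hr hab
    by_cases h1 : gl Z (a - 1) = some (ρ (a - 1))
    · have hb := gl_some_bound h1
      obtain ⟨a', b', h2, h3, h4⟩ := ih _ (by omega) (a - 1) b (by omega) (fun t ht1 ht2 => by
        rcases eq_or_lt_of_le ht1 with h | h
        · rw [← h, h1]
        · exact hr t (by omega) ht2) rfl
      exact ⟨a', b', by omega, h3, h4⟩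
    by_cases h2 : gl Z b = some (ρ b)
    · have hb := gl_some_bound h2
      obtain ⟨a', b', h2, h3, h4⟩ := ih _ (by omega) a (b + 1) (by omega) (fun t ht1 ht2 => by
        rcases eq_or_lt_of_le (by omega : t ≤ b) with h | h
        · rw [h, h2]
        · exact hr t (by omega) (by omega)) rfl
      exact ⟨a', b', by omega, by omega, h4⟩
    exact ⟨a, b, le_rfl, le_rfl, hr, h1, h2⟩
  exact this _ a b hab hr rfl

theorem irr_or_strong {α : Type} [DecidableEq α] {Ω : (ℤ → α × Bool) → ℤ → Prop} (hΩ : SC Ω)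
    (y : FreeGroup α) : Irr Ω (gl y.toWord) ∨ ∃ z, Strong Ω y z := by
  by_cases h : Irr Ω (gl y.toWord)
  · exact Or.inl h
  right
  unfold Irr at h
  push Not at h
  obtain ⟨ρ, π, a, b, hρ, hr, h1⟩ := h
  have hp := hΩ.big _ _ hρ
  obtain ⟨a', b', h2, h3, h4, h5, h6⟩ := exists_max _ _ _ _ (by omega) hr
  have := reads_le h4 (by omega)
  exact ⟨_, ρ, π, a', b', hρ, this.1, h4, h5, h6, by omega, rfl⟩

/-- Description of a flip. -/
theorem flip_word {α : Type} [DecidableEq α] {Ω : (ℤ → α × Bool) → ℤ → Prop} (hΩ : SC Ω)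
    (y : FreeGroup α) {ρ π} (hρ : Ω ρ π) (a b : ℤ) (h0 : 0 ≤ a) (hab : a < b) (hπ : b - a < π)
    (hr : Reads (gl y.toWord) ρ a b)
    (hm1 : gl y.toWord (a - 1) ≠ some (ρ (a - 1))) (hm2 : gl y.toWord b ≠ some (ρ b))
    (z : FreeGroup α) (hz : z = pre y.toWord a * E ρ a (b - π) * suf y.toWord b) :
    (∀ k, k < a → gl z.toWord k = gl y.toWord k) ∧
    (∀ k, a ≤ k → k < a + (π - (b - a)) → gl z.toWord k = some (rev (2 * a) ρ k)) ∧
    (∀ k, a + (π - (b - a)) ≤ k → gl z.toWord k = gl y.toWord (k + (2 * (b - a) - π))) := by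
  have hL := reads_le hr hab
  obtain ⟨q, hq⟩ : ∃ q : ℕ, (q : ℤ) = π - (b - a) := ⟨(π - (b - a)).toNat, by omega⟩
  set A := y.toWord.take a.toNat with hA
  set B := y.toWord.drop b.toNat with hB
  have lA : (A.length : ℤ) = a := by rw [hA, List.length_take]; omega
  have gA : ∀ k, k < a → gl A k = gl y.toWord k := by
    intro k hk
    rw [hA, gl_take _ _ _ (by omega)]
  have gB : ∀ k, 0 ≤ k → gl B k = gl y.toWord (k + b) := by
    intro k hk
    rw [hB, gl_drop _ _ _ hk]
    congr 1
    omega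
  have hred := redG_toWord y
  have rA : RedG (gl A) := by
    intro k l l' e1 e2 e3
    have := (gl_some_bound e2).2
    rw [gA _ (by omega)] at e1
    rw [gA _ (by omega)] at e2
    exact hred _ _ _ e1 e2 e3
  have rB : RedG (gl B) := by
    intro k l l' e1 e2 e3
    have := (gl_some_bound e1).1
    rw [gB _ (by omega)] at e1
    rw [gB _ (by omega)] at e2
    exact hred _ _ _ e1 (by rw [← e2]; congr 1; ring) e3
  have hρ' := hΩ.rev ρ π (2 * a) hρ
  have hw := toWord3 A B (rev (2 * a) ρ) a q (by omega) rA rB (hΩ.red _ _ hρ')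
    (by
      rw [lA, gA _ (by omega)]
      simp only [rev, bar_bar]
      rw [show 2 * a - 1 - a = a - 1 by ring]
      exact hm1)
    (by
      rw [gB _ le_rfl, zero_add]
      simp only [rev, bar_bar]
      rw [show 2 * a - 1 - (a + q - 1) = b + (-1) * π by rw [hq]; ring, hΩ.perk hρ]
      exact hm2)
  have he : z = mk A * E (rev (2 * a) ρ) a (a + q) * mk B := by
    rw [hz, E_rev ρ (2 * a)]
    rw [show 2 * a - a = a by ring, show 2 * a - (b - π) = a + q by rw [hq]; ring]
    rfl
  rw [← he] at hw
  obtain ⟨g1, g2, g3⟩ := gl3 A B (rev (2 * a) ρ) a q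
  rw [← hw] at g1 g2 g3
  rw [lA] at g1 g2 g3
  refine ⟨?_, ?_, ?_⟩
  · intro k hk
    rw [g1 k hk, gA k hk]
  · intro k hk1 hk2
    rw [g2 k hk1 (by omega)]
    congr 2
    ring
  · intro k hk
    rw [g3 k (by omega), gB _ (by omega)]
    congr 1
    rw [hq]
    ring

end SmallCanc

namespace SmallCanc
open FreeGroup

/-- `z'` is obtained from `z` by flipping the reading of `ρ` on `[a,b)`. -/
def Flip {α : Type} (z z' : ℤ → Option (α × Bool)) (ρ : ℤ → α × Bool) (π a b : ℤ) : Prop :=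
  (∀ k, k < a → z' k = z k) ∧
  (∀ k, a ≤ k → k < a + (π - (b - a)) → z' k = some (rev (2 * a) ρ k)) ∧
  (∀ k, a + (π - (b - a)) ≤ k → z' k = z (k + (2 * (b - a) - π)))

/-- The invariant. -/
def Inv {α : Type} (Ω : (ℤ → α × Bool) → ℤ → Prop) (y z : ℤ → Option (α × Bool))
    (n0 n1 s : ℤ) : Prop :=
  (∀ k, k < n0 → z k = y k) ∧ (∀ k, n1 ≤ k → z k = y (k + s)) ∧
  (∃ ρL πL cL ρR πR cR, Ω ρL πL ∧ Ω ρR πR ∧ Reads z ρL n0 cL ∧ πL ≤ 10 * (cL - n0) ∧ cL ≤ cR ∧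
    Reads z ρR cR n1 ∧ πR ≤ 10 * (n1 - cR) ∧ z (n0 - 1) ≠ some (ρL (n0 - 1)) ∧ z n1 ≠ some (ρR n1)) ∧
  (∀ ρ π a b, Ω ρ π → n0 ≤ a → b ≤ n1 → Reads z ρ a b → 4 * (b - a) < 3 * π)

/-- Reflection of a partial word. -/
def reflF {α : Type} (c : ℤ) (z : ℤ → Option (α × Bool)) : ℤ → Option (α × Bool) :=
  fun k => (z (c - 1 - k)).map bar

theorem reflF_reflF {α : Type} (c : ℤ) (z : ℤ → Option (α × Bool)) : reflF c (reflF c z) = z := by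
  funext k
  simp only [reflF]
  rw [show c - 1 - (c - 1 - k) = k by ring]
  cases z k <;> simp [bar_bar]

theorem reflF_some {α : Type} (c : ℤ) (z : ℤ → Option (α × Bool)) (ρ : ℤ → α × Bool) (k : ℤ) :
    reflF c z k = some (rev c ρ k) ↔ z (c - 1 - k) = some (ρ (c - 1 - k)) := by
  simp only [reflF, rev, Option.map_eq_some_iff]
  constructor
  · rintro ⟨l, h1, h2⟩
    rw [h1, bar_inj h2]
  · intro h
    exact ⟨_, h, rfl⟩

theorem reads_refl {α : Type} (c : ℤ) (z : ℤ → Option (α × Bool)) (ρ : ℤ → α × Bool) (a b : ℤ)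
    (h : Reads z ρ a b) : Reads (reflF c z) (rev c ρ) (c - b) (c - a) := by
  intro k h1 h2
  rw [reflF_some]
  exact h _ (by omega) (by omega)

theorem redG_refl {α : Type} (c : ℤ) (z : ℤ → Option (α × Bool)) (h : RedG z) :
    RedG (reflF c z) := by
  intro k l l' e1 e2 e3
  simp only [reflF, Option.map_eq_some_iff] at e1 e2
  obtain ⟨m, e1, rfl⟩ := e1
  obtain ⟨m', e2, rfl⟩ := e2
  rw [bar_bar] at e3
  exact h _ _ _ e2 (by rw [← e1]; congr 1; ring) e3.symm

theorem irr_refl {α : Type} {Ω : (ℤ → α × Bool) → ℤ → Prop} (hΩ : SC Ω) (c : ℤ)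
    (z : ℤ → Option (α × Bool)) (h : Irr Ω z) : Irr Ω (reflF c z) := by
  intro ρ π a b hρ hr
  have := reads_refl c _ _ _ _ hr
  rw [reflF_reflF] at this
  have := h _ _ _ _ (hΩ.rev ρ π c hρ) this
  omega

theorem inv_refl {α : Type} {Ω : (ℤ → α × Bool) → ℤ → Prop} (hΩ : SC Ω)
    (y z : ℤ → Option (α × Bool)) (n0 n1 s c : ℤ) (h : Inv Ω y z n0 n1 s) :
    Inv Ω (reflF (c + s) y) (reflF c z) (c - n1) (c - n0) s := by
  obtain ⟨h1, h2, ⟨ρL, πL, cL, ρR, πR, cR, a1, a2, a3, a4, a5, a6, a7, a8, a9⟩, h4⟩ := h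
  refine ⟨?_, ?_, ⟨rev c ρR, πR, c - cR, rev c ρL, πL, c - cL, hΩ.rev _ _ _ a2, hΩ.rev _ _ _ a1,
    reads_refl _ _ _ _ _ a6, by omega, by omega, reads_refl _ _ _ _ _ a3, by omega, ?_, ?_⟩, ?_⟩
  · intro k hk
    simp only [reflF]
    rw [h2 _ (by omega)]
    congr 2
    ring
  · intro k hk
    simp only [reflF]
    rw [h1 _ (by omega)]
    congr 2
    ring
  · rw [Ne, reflF_some, show c - 1 - (c - n1 - 1) = n1 by ring]
    exact a9
  · rw [Ne, reflF_some, show c - 1 - (c - n0) = n0 - 1 by ring]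
    exact a8
  · intro ρ π a b hρ ha hb hr
    have := reads_refl c _ _ _ _ hr
    rw [reflF_reflF] at this
    have := h4 _ _ _ _ (hΩ.rev ρ π c hρ) (by omega) (by omega) this
    omega

theorem flip_refl {α : Type} {Ω : (ℤ → α × Bool) → ℤ → Prop} (hΩ : SC Ω)
    (z z' : ℤ → Option (α × Bool)) {ρ π} (hρ : Ω ρ π) (a b c : ℤ) (h : Flip z z' ρ π a b) :
    Flip (reflF c z) (reflF (c - (2 * (b - a) - π)) z') (rev c ρ) π (c - b) (c - a) := by
  obtain ⟨h1, h2, h3⟩ := h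
  refine ⟨?_, ?_, ?_⟩
  · intro k hk
    simp only [reflF]
    rw [h3 _ (by omega)]
    congr 2
    ring
  · intro k hk1 hk2
    simp only [reflF]
    rw [h2 _ (by omega) (by omega)]
    simp only [Option.map_some, rev, bar_bar]
    congr 1
    rw [show 2 * a - 1 - (c - (2 * (b - a) - π) - 1 - k) = c - 1 - (2 * (c - b) - 1 - k) + (-1) * π by ring]
    exact hΩ.perk hρ _ _
  · intro k hk
    simp only [reflF]
    rw [h1 _ (by omega)]
    congr 2
    ring

theorem flip_left_ne {α : Type} (z z' : ℤ → Option (α × Bool)) (ρ : ℤ → α × Bool) (π a b : ℤ)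
    (h : Flip z z' ρ π a b) (hz : RedG z) (hr : Reads z ρ a b) (hab : a < b) :
    z' (a - 1) ≠ some (rev (2 * a) ρ (a - 1)) := by
  intro e
  rw [h.1 _ (by omega)] at e
  refine hz _ _ _ e (by rw [sub_add_cancel]; exact hr a le_rfl hab) ?_
  simp only [rev, bar_bar]
  congr 1
  ring

theorem flip_right_ne {α : Type} {Ω : (ℤ → α × Bool) → ℤ → Prop} (hΩ : SC Ω)
    (z z' : ℤ → Option (α × Bool)) {ρ π} (hρ : Ω ρ π) (a b : ℤ)
    (h : Flip z z' ρ π a b) (hz : RedG z) (hr : Reads z ρ a b) (hab : a < b) :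
    z' (a + (π - (b - a))) ≠ some (rev (2 * a) ρ (a + (π - (b - a)))) := by
  intro e
  rw [h.2.2 _ le_rfl] at e
  refine hz (b - 1) _ _ (hr _ (by omega) (by omega))
    (by rw [show b - 1 + 1 = a + (π - (b - a)) + (2 * (b - a) - π) by ring]; exact e) ?_
  simp only [rev]
  rw [show 2 * a - 1 - (a + (π - (b - a))) = b - 1 + (-1) * π by ring, hΩ.perk hρ]

theorem small' {α : Type} {Ω : (ℤ → α × Bool) → ℤ → Prop} (hΩ : SC Ω)
    (z : ℤ → Option (α × Bool)) {ρ π ρ' π'} (hρ : Ω ρ π) (hρ' : Ω ρ' π') (a b i j i' j' : ℤ)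
    (h : Reads z ρ i j) (h' : Reads z ρ' i' j') (h1 : i ≤ a) (h2 : i' ≤ a) (h3 : b ≤ j) (h4 : b ≤ j')
    (h5 : π ≤ 20 * (b - a)) : ρ = ρ' ∧ π = π' := by
  refine hΩ.small ρ π ρ' π' a b hρ hρ' (fun t ht1 ht2 => ?_) h5
  exact Option.some.inj ((h t (by omega) (by omega)).symm.trans (h' t (by omega) (by omega)))

theorem inv_left {α : Type} {Ω : (ℤ → α × Bool) → ℤ → Prop} (hΩ : SC Ω)
    (y z z' : ℤ → Option (α × Bool)) (n0 n1 s : ℤ) (hy : Irr Ω y) (hz : RedG z)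
    (hI : Inv Ω y z n0 n1 s) {ρ π} (hρ : Ω ρ π) (a b : ℤ) (hr : Reads z ρ a b)
    (hst : 3 * π ≤ 4 * (b - a)) (hF : b - a < π → Flip z z' ρ π a b) (ha : a < n0) (hb : n0 < b) :
    b - a < π ∧ ∃ n0' n1', Inv Ω y z' n0' n1' (s + (2 * (b - a) - π)) := by
  obtain ⟨i1, i2, ⟨ρL, πL, cL, ρR, πR, cR, a1, a2, a3, a4, a5, a6, a7, a8, a9⟩, i4⟩ := hI
  have hp := hΩ.big _ _ hρ
  have hpL := hΩ.big _ _ a1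
  have hpR := hΩ.big _ _ a2
  have neL : ρ ≠ ρL := by
    rintro rfl
    exact a8 (hr _ (by omega) (by omega))
  have b1 : 20 * (min b cL - n0) < π := by
    by_contra h
    exact neL (small' hΩ z hρ a1 n0 (min b cL) _ _ _ _ hr a3 (by omega) (by omega) (by omega) (by omega)
      (by omega)).1
  have b2 : 20 * (min b cL - n0) < πL := by
    by_contra h
    exact neL (small' hΩ z a1 hρ n0 (min b cL) _ _ _ _ a3 hr (by omega) (by omega) (by omega) (by omega)
      (by omega)).1.symm
  have hbc : b < cL := by omega
  have b3 : 4 * (n0 - a) < 3 * π := hy ρ π a n0 hρ (fun t ht1 ht2 => by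
    rw [← i1 t ht2]; exact hr t ht1 (by omega))
  have hlt : b - a < π := by omega
  refine ⟨hlt, ?_⟩
  have hF := hF hlt
  have hl := flip_left_ne z z' ρ π a b hF hz hr (by omega)
  have hrn := flip_right_ne hΩ z z' hρ a b hF hz hr (by omega)
  have hρ' := hΩ.rev ρ π (2 * a) hρ
  obtain ⟨f1, f2, f3⟩ := hF
  obtain ⟨q, hq⟩ : ∃ q, q = π - (b - a) := ⟨_, rfl⟩
  obtain ⟨s1, hs1⟩ : ∃ s1, s1 = 2 * (b - a) - π := ⟨_, rfl⟩
  rw [← hq] at f2 f3 hrn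
  rw [← hs1] at f3
  rw [← hs1]
  refine ⟨a, n1 - s1, ?_, ?_, ⟨rev (2 * a) ρ, π, a + q, fun k => ρR (k + s1), πR, cR - s1,
    hρ', hΩ.shift _ _ _ a2, f2, by omega, by omega, ?_, by omega, hl, ?_⟩, ?_⟩
  · intro k hk
    rw [f1 k hk, i1 k (by omega)]
  · intro k hk
    rw [f3 k (by omega), i2 _ (by omega)]
    congr 1
    ring
  · intro k hk1 hk2
    rw [f3 k (by omega)]
    exact a6 _ (by omega) (by omega)
  · rw [f3 _ (by omega)]
    simp only [sub_add_cancel]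
    exact a9
  · intro ρ2 π2 u v hρ2 hu hv hr2
    by_contra hcon
    have hp2 := hΩ.big _ _ hρ2
    have hr3 : Reads z (fun k => ρ2 (k + -s1)) (max u (a + q) + s1) (v + s1) := by
      intro k hk1 hk2
      have := hr2 (k + -s1) (by omega) (by omega)
      rw [f3 _ (by omega)] at this
      rw [← this]
      congr 1
      ring
    have hρ3 := hΩ.shift _ _ (-s1) hρ2
    rcases le_or_gt v (a + q) with h1 | h1
    · obtain ⟨e1, e2⟩ := small' hΩ z' hρ2 hρ' u v _ _ _ _ hr2 f2 (by omega) (by omega) (by omega) (by omega)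
        (by omega)
      omega
    rcases le_or_gt (a + q) u with h2 | h2
    · have := i4 _ _ _ _ hρ3 (by omega) (by omega) hr3
      omega
    by_cases h3 : π2 ≤ 20 * (a + q - u)
    · obtain ⟨e1, e2⟩ := small' hΩ z' hρ2 hρ' u (a + q) _ _ _ _ hr2 f2 (by omega) (by omega) (by omega) (by omega)
        (by omega)
      apply hrn
      rw [← e1]
      exact hr2 _ (by omega) (by omega)
    · have e : (fun k => ρ2 (k + -s1)) = ρL := by
        rcases le_or_gt cL (v + s1) with h4 | h4
        · exact (small' hΩ z a1 hρ3 b cL _ _ _ _ a3 hr3 (by omega) (by omega) (by omega) (by omega)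
            (by omega)).1.symm
        · exact (small' hΩ z hρ3 a1 b (v + s1) _ _ _ _ hr3 a3 (by omega) (by omega) (by omega) (by omega)
            (by omega)).1
      have e1 := (hr2 (a + q - 1) (by omega) (by omega)).symm.trans (f2 (a + q - 1) (by omega) (by omega))
      have e2 := congrFun e (b - 1)
      have e3 := (a3 (b - 1) (by omega) (by omega)).symm.trans (hr (b - 1) (by omega) (by omega))
      have e1 := Option.some.inj e1
      have e3 := Option.some.inj e3
      simp only [rev] at e1
      rw [show 2 * a - 1 - (a + q - 1) = b + (-1) * π by omega, hΩ.perk hρ] at e1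
      rw [show b - 1 + -s1 = a + q - 1 by omega, e1, e3] at e2
      apply hΩ.red _ _ hρ (b - 1)
      rw [← e2, bar_bar, sub_add_cancel]

theorem inv_step {α : Type} {Ω : (ℤ → α × Bool) → ℤ → Prop} (hΩ : SC Ω)
    (y z z' : ℤ → Option (α × Bool)) (n0 n1 s : ℤ) (hy : Irr Ω y) (hz : RedG z)
    (hI : Inv Ω y z n0 n1 s) {ρ π} (hρ : Ω ρ π) (a b : ℤ) (hr : Reads z ρ a b)
    (hst : 3 * π ≤ 4 * (b - a)) (hF : b - a < π → Flip z z' ρ π a b) :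
    ∃ n0' n1' s', Inv Ω y z' n0' n1' s' := by
  have hp := hΩ.big _ _ hρ
  rcases le_or_gt b n0 with h1 | h1
  · have := hy ρ π a b hρ (fun t ht1 ht2 => by
      rw [← hI.1 t (by omega)]; exact hr t ht1 (by omega))
    omega
  rcases le_or_gt n1 a with h2 | h2
  · have := hy _ π (a + s) (b + s) (hΩ.shift _ _ (-s) hρ) (fun t ht1 ht2 => by
      have e := hI.2.1 (t + -s) (by omega)
      rw [neg_add_cancel_right] at e
      rw [← e]; exact hr _ (by omega) (by omega))
    omega
  rcases lt_or_ge a n0 with h3 | h3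
  · obtain ⟨-, m0, m1, h⟩ := inv_left hΩ y z z' n0 n1 s hy hz hI hρ a b hr hst hF h3 h1
    exact ⟨_, _, _, h⟩
  rcases le_or_gt b n1 with h4 | h4
  · have := hI.2.2.2 _ _ _ _ hρ h3 h4 hr
    omega
  · obtain ⟨hlt, m0, m1, hI'⟩ := inv_left hΩ (reflF (0 + s) y) (reflF 0 z)
      (reflF (0 - (2 * (b - a) - π)) z') (0 - n1) (0 - n0) s (irr_refl hΩ _ _ hy) (redG_refl _ _ hz)
      (inv_refl hΩ _ _ _ _ _ 0 hI) (hΩ.rev _ _ 0 hρ) (0 - b) (0 - a) (reads_refl 0 _ _ _ _ hr)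
      (by omega) (fun h => flip_refl hΩ z z' hρ a b 0 (hF (by omega))) (by omega) (by omega)
    have := inv_refl hΩ _ _ _ _ _ (0 - (2 * (b - a) - π)) hI'
    rw [reflF_reflF, show 0 - (2 * (b - a) - π) + (s + (2 * (0 - a - (0 - b)) - π)) = 0 + s by ring,
      reflF_reflF] at this
    exact ⟨_, _, _, this⟩

theorem inv_init {α : Type} {Ω : (ℤ → α × Bool) → ℤ → Prop} (hΩ : SC Ω)
    (y z : ℤ → Option (α × Bool)) (hy : RedG y) {ρ π} (hρ : Ω ρ π) (a b : ℤ) (hr : Reads y ρ a b)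
    (h1 : π ≤ 2 * (b - a)) (h2 : 4 * (b - a) < 3 * π) (hF : Flip y z ρ π a b) :
    ∃ n0 n1 s, Inv Ω y z n0 n1 s := by
  have hp := hΩ.big _ _ hρ
  have hl := flip_left_ne y z ρ π a b hF hy hr (by omega)
  have hrn := flip_right_ne hΩ y z hρ a b hF hy hr (by omega)
  have hρ' := hΩ.rev ρ π (2 * a) hρ
  obtain ⟨f1, f2, f3⟩ := hF
  refine ⟨a, a + (π - (b - a)), 2 * (b - a) - π, f1, f3, ⟨rev (2 * a) ρ, π, a + (π - (b - a)) / 2,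
    rev (2 * a) ρ, π, a + (π - (b - a)) / 2, hρ', hρ', fun t ht1 ht2 => f2 t ht1 (by omega), by omega,
    le_rfl, fun t ht1 ht2 => f2 t (by omega) ht2, by omega, hl, hrn⟩, ?_⟩
  intro ρ2 π2 u v hρ2 hu hv hr2
  by_contra hcon
  have hp2 := hΩ.big _ _ hρ2
  obtain ⟨e1, e2⟩ := small' hΩ z hρ2 hρ' u v _ _ _ _ hr2 f2 (by omega) (by omega) (by omega) (by omega)
        (by omega)
  omega

theorem lemmaX {α : Type} [DecidableEq α] {Ω : (ℤ → α × Bool) → ℤ → Prop} (hΩ : SC Ω)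
    (y' y x0 : FreeGroup α) (hirr : Irr Ω (gl y'.toWord)) (he : Edge Ω y' y) (hlt : y.norm < y'.norm)
    (hx : x0.norm ≤ 1) (hs : Relation.ReflTransGen (Strong Ω) y x0) : False := by
  have h1 : ∃ n0 n1 s, Inv Ω (gl y'.toWord) (gl y.toWord) n0 n1 s := by
    obtain ⟨ρ, π, a, b, k, hρ, h0, hab, hr, hm1, hm2, hz, hk, hk0⟩ := ENF hΩ y' y he
      (by rintro rfl; omega) hlt.le
    have hp := hΩ.big _ _ hρ
    have h3 := hirr _ _ _ _ hρ hr
    have hb := abs_le.1 hk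
    have hk1 : k = -1 := by
      have : -2 < k := by
        by_contra h
        have : k * π ≤ -2 * π := mul_le_mul_of_nonneg_right (by omega) (by omega)
        omega
      have : k < 1 := by
        by_contra h
        have : 1 * π ≤ k * π := mul_le_mul_of_nonneg_right (by omega) (by omega)
        omega
      omega
    subst hk1
    rw [show b + -1 * π = b - π by ring] at hz
    exact inv_init hΩ _ _ (redG_toWord y') hρ a b hr (by omega) h3
      (flip_word hΩ y' hρ a b h0 hab (by omega) hr hm1 hm2 y hz)
  have h2 : ∃ n0 n1 s, Inv Ω (gl y'.toWord) (gl x0.toWord) n0 n1 s := by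
    clear hx
    induction hs with
    | refl => exact h1
    | @tail z z' _ hzz ih =>
      obtain ⟨ρ, π, a, b, hρ, h0, hr, hm1, hm2, hst, hz⟩ := hzz
      have hp := hΩ.big _ _ hρ
      have := hΩ.big _ _ hρ
      obtain ⟨n0, n1, s, hI⟩ := ih
      exact inv_step hΩ _ _ _ n0 n1 s hirr (redG_toWord z) hI hρ a b hr hst
        (fun hlt => flip_word hΩ z hρ a b h0 (by omega) hlt hr hm1 hm2 z' hz)
  obtain ⟨n0, n1, s, -, -, ⟨ρL, πL, cL, ρR, πR, cR, a1, a2, a3, a4, a5, a6, a7, a8, a9⟩, -⟩ := h2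
  have hp := hΩ.big _ _ a1
  have := reads_le a3 (by omega)
  unfold FreeGroup.norm at hx
  omega

theorem closure_step {α : Type} [DecidableEq α] {Ω : (ℤ → α × Bool) → ℤ → Prop} (hΩ : SC Ω)
    (x0 : FreeGroup α) (hx : x0.norm ≤ 1) : ∀ N M : ℕ, ∀ y y' : FreeGroup α, Edge Ω y y' →
      y.norm ≤ N → y'.norm ≤ N → y.norm + y'.norm ≤ M →
      Relation.ReflTransGen (Strong Ω) y x0 → Relation.ReflTransGen (Strong Ω) y' x0 := by
  intro N
  induction N using Nat.strong_induction_on with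
  | _ N ihN =>
  intro M
  induction M using Nat.strong_induction_on with
  | _ M ihM =>
  intro y y' he hy hy' hM hS
  by_cases hne : y = y'
  · exact hne ▸ hS
  rcases le_or_gt y'.norm y.norm with hle | hlt
  · obtain ⟨ρ, π, a, b, k, hρ, h0, hab, hr, hm1, hm2, hz, hk, hk0⟩ := ENF hΩ y y' he hne hle
    have hp := hΩ.big _ _ hρ
    rcases Relation.ReflTransGen.cases_head hS with h | ⟨y1, h1, h2⟩
    · exfalso
      subst h
      have h3 := reads_le hr hab
      have hb := abs_le.1 hk
      unfold FreeGroup.norm at hx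
      rcases lt_or_gt_of_ne hk0 with h | h
      · have : k * π ≤ -1 * π := mul_le_mul_of_nonneg_right (by omega) (by omega)
        omega
      · have : 1 * π ≤ k * π := mul_le_mul_of_nonneg_right (by omega) (by omega)
        omega
    · have hl := h1.norm_lt hΩ
      rcases square hΩ y y' y1 h1 hρ a b k h0 hab hr hk hk0 hz with h | ⟨w, w1, w2, w3⟩
      · exact ihM (y1.norm + y'.norm) (by omega) y1 y' h.symm (by omega) hy' le_rfl h2
      · have hw := ihN (max y1.norm w.norm) (by omega) _ y1 w w2.symm (by omega) (by omega) le_rfl h2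
        exact ihM (w.norm + y'.norm) (by omega) w y' w1.symm (by omega) hy' le_rfl hw
  · rcases irr_or_strong hΩ y' with h | ⟨z, hz'⟩
    · exact (lemmaX hΩ y' y x0 h he.symm hlt hx hS).elim
    · have hl := hz'.norm_lt hΩ
      obtain ⟨ρ, π, a, b, k, hρ, h0, hab, hr, hm1, hm2, hz, hk, hk0⟩ := ENF hΩ y' y he.symm
        (Ne.symm hne) hlt.le
      refine Relation.ReflTransGen.head hz' ?_
      rcases square hΩ y' y z hz' hρ a b k h0 hab hr hk hk0 hz with h | ⟨w, w1, w2, w3⟩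
      · exact ihN (max y.norm z.norm) (by omega) _ y z h (by omega) (by omega) le_rfl hS
      · have hw := ihN (max y.norm w.norm) (by omega) _ y w w1 (by omega) (by omega) le_rfl hS
        exact ihN (max w.norm z.norm) (by omega) _ w z w2 (by omega) (by omega) le_rfl hw

theorem main_abstract {α : Type} [DecidableEq α] {Ω : (ℤ → α × Bool) → ℤ → Prop} (hΩ : SC Ω)
    (x x' : FreeGroup α) (hx : x.norm ≤ 1) (hx' : x'.norm ≤ 1)
    (h : Relation.ReflTransGen (Edge Ω) x x') : x = x' := by
  have key : Relation.ReflTransGen (Strong Ω) x' x := by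
    clear hx'
    induction h with
    | refl => exact Relation.ReflTransGen.refl
    | @tail y y' _ he ih =>
      exact closure_step hΩ x hx (max y.norm y'.norm) _ y y' he (by omega) (by omega) le_rfl ih
  rcases Relation.ReflTransGen.cases_head key with h | ⟨y1, h1, -⟩
  · exact h.symm
  · have := h1.norm_lt hΩ
    obtain ⟨ρ, π, a, b, hρ, h0, hr, hm1, hm2, hst, hz⟩ := h1
    have hp := hΩ.big _ _ hρ
    have := reads_le hr (by omega)
    unfold FreeGroup.norm at hx'
    omega

/-- Words trivial modulo relators read along the family. -/
theorem main_group {α : Type} [DecidableEq α] {Ω : (ℤ → α × Bool) → ℤ → Prop} (hΩ : SC Ω)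
    (R : Set (FreeGroup α)) (hR : ∀ r ∈ R, ∃ g ρ π, Ω ρ π ∧ r = g * E ρ 0 π * g⁻¹)
    (x x' : FreeGroup α) (hx : x.norm ≤ 1) (hx' : x'.norm ≤ 1)
    (h : x' * x⁻¹ ∈ Subgroup.normalClosure R) : x = x' := by
  have edge1 : ∀ r ∈ R, ∀ g y : FreeGroup α, Edge Ω y (g * r * g⁻¹ * y) := by
    intro r hr g y
    obtain ⟨h, ρ, π, hρ, rfl⟩ := hR r hr
    refine ⟨g * h, h⁻¹ * g⁻¹ * y, ρ, π, 0, 0, 1, hρ, ?_, ?_⟩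
    · rw [E_self]; group
    · rw [zero_add, one_mul]; group
  have key : ∀ n ∈ Subgroup.normalClosure R, ∀ y, Relation.ReflTransGen (Edge Ω) y (n * y) := by
    intro n hn
    unfold Subgroup.normalClosure at hn
    induction hn using Subgroup.closure_induction with
    | mem c hc =>
      intro y
      obtain ⟨r, hr, hc⟩ := Group.mem_conjugatesOfSet_iff.1 hc
      obtain ⟨g, rfl⟩ := isConj_iff.1 hc
      exact Relation.ReflTransGen.single (edge1 r hr g y)
    | one => intro y; rw [one_mul]
    | mul a b _ _ iha ihb =>
      intro y
      rw [mul_assoc]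
      exact (ihb y).trans (iha _)
    | inv a _ iha =>
      intro y
      have := iha (a⁻¹ * y)
      rw [mul_inv_cancel_left] at this
      have hsymm : Std.Symm (Edge Ω) := ⟨fun _ _ h => h.symm⟩
      exact (Relation.ReflTransGen.stdSymm (r := Edge Ω)).symm _ _ this
  have := key _ h x
  rw [inv_mul_cancel_right] at this
  exact main_abstract hΩ x x' hx hx' this

end SmallCanc

namespace SmallCanc
open FreeGroup

/-- Block data. -/
structure BD (α : Type) where
  y : α
  xs : List α
  K : ℕ
  ex : ℕ → ℕ
  last : List (α × Bool)

/-- Positive letters. -/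
def posL {α : Type} (l : List α) : List (α × Bool) := l.map fun x => (x, true)

namespace BD
variable {α : Type}

/-- prefix of block `k` -/
def pr (D : BD α) (k : ℕ) : List (α × Bool) := if k < D.K then posL D.xs else D.last
/-- block `k` -/
def blk (D : BD α) (k : ℕ) : List (α × Bool) := D.pr k ++ List.replicate (D.ex k) (D.y, true)
/-- partial word -/
def Wn (D : BD α) (n : ℕ) : List (α × Bool) := (List.range n).flatMap D.blk
/-- block starts -/
def S (D : BD α) (n : ℕ) : ℕ := (D.Wn n).length
/-- period -/
def per (D : BD α) : ℤ := (D.S (D.K + 1) : ℤ)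
/-- periodic sequence -/
def seq (D : BD α) (t : ℤ) : α × Bool := (D.Wn (D.K + 1)).getD (t % D.per).toNat (D.y, true)

theorem Wn_succ (D : BD α) (n : ℕ) : D.Wn (n + 1) = D.Wn n ++ D.blk n := by
  simp [Wn, List.range_succ]

theorem S_zero (D : BD α) : D.S 0 = 0 := rfl

theorem blk_length (D : BD α) (k : ℕ) : (D.blk k).length = (D.pr k).length + D.ex k := by
  simp [blk]

theorem S_succ (D : BD α) (n : ℕ) : D.S (n + 1) = D.S n + ((D.pr n).length + D.ex n) := by
  rw [S, Wn_succ, List.length_append, blk_length]; rfl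

theorem S_mono (D : BD α) {n m : ℕ} (h : n ≤ m) : D.S n ≤ D.S m := by
  induction h with
  | refl => rfl
  | step _ ih => rw [S_succ]; omega

theorem Wn_get (D : BD α) (n k o : ℕ) (hk : k < n) (ho : o < (D.blk k).length) :
    (D.Wn n)[D.S k + o]? = (D.blk k)[o]? := by
  induction n with
  | zero => omega
  | succ n ih =>
    rw [Wn_succ]
    rcases Nat.lt_or_ge k n with h | h
    · rw [List.getElem?_append_left, ih h]
      have h1 := D.S_mono (show k + 1 ≤ n from h)
      rw [S_succ, ← blk_length] at h1
      change _ < D.S n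
      omega
    · have : k = n := by omega
      subst this
      rw [List.getElem?_append_right (by change D.S k ≤ _; omega)]
      congr 1
      change D.S k + o - D.S k = o
      omega

theorem seq_per (D : BD α) (j t : ℤ) : D.seq (t + j * D.per) = D.seq t := by
  simp [seq]

theorem seq_val (D : BD α) (k o : ℕ) (j : ℤ) (hk : k ≤ D.K) (ho : o < (D.blk k).length) :
    (D.blk k)[o]? = some (D.seq (D.S k + o + j * D.per)) := by
  rw [seq_per]
  have h1 := D.S_mono (show k + 1 ≤ D.K + 1 by omega)
  rw [S_succ, ← blk_length] at h1
  have h2 := D.Wn_get (D.K + 1) k o (by omega) ho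
  unfold seq
  rw [Int.emod_eq_of_lt (by omega) (by unfold per; omega)]
  rw [show ((D.S k : ℤ) + o).toNat = D.S k + o by omega, List.getD_eq_getElem?_getD, h2]
  rw [List.getElem?_eq_getElem ho]
  rfl

theorem val_pr (D : BD α) (k o : ℕ) (j : ℤ) (hk : k ≤ D.K) (ho : o < (D.pr k).length) :
    (D.pr k)[o]? = some (D.seq (D.S k + o + j * D.per)) := by
  rw [← seq_val D k o j hk (by rw [blk_length]; omega), blk, List.getElem?_append_left ho]

theorem val_y (D : BD α) (k o : ℕ) (j : ℤ) (hk : k ≤ D.K) (h1 : (D.pr k).length ≤ o)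
    (h2 : o < (D.pr k).length + D.ex k) : D.seq (D.S k + o + j * D.per) = (D.y, true) := by
  have := seq_val D k o j hk (by rw [blk_length]; omega)
  rw [blk, List.getElem?_append_right h1, List.getElem?_replicate_of_lt (by omega)] at this
  exact (Option.some.inj this).symm

theorem locate (D : BD α) (hp : 0 < D.per) (t : ℤ) : ∃ (j : ℤ) (k o : ℕ), k ≤ D.K ∧
    o < (D.pr k).length + D.ex k ∧ t = D.S k + o + j * D.per := by
  have key : ∀ n : ℕ, ∀ u : ℕ, u < D.S n → ∃ k o : ℕ, k < n ∧ o < (D.pr k).length + D.ex k ∧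
      u = D.S k + o := by
    intro n
    induction n with
    | zero => intro u hu; rw [S_zero] at hu; omega
    | succ n ih =>
      intro u hu
      rcases Nat.lt_or_ge u (D.S n) with h | h
      · obtain ⟨k, o, h1, h2, h3⟩ := ih u h
        exact ⟨k, o, by omega, h2, h3⟩
      · rw [S_succ] at hu
        exact ⟨n, u - D.S n, by omega, by omega, by omega⟩
  have h0 := Int.emod_nonneg t hp.ne'
  have h1 := Int.emod_lt_of_pos t hp
  obtain ⟨k, o, h2, h3, h4⟩ := key (D.K + 1) (t % D.per).toNat (by unfold per at *; omega)
  refine ⟨t / D.per, k, o, by omega, h3, ?_⟩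
  have := Int.emod_add_mul_ediv t D.per
  rw [mul_comm] at this
  omega

/-- Well-formedness. -/
structure WF (D : BD α) : Prop where
  xs_ne : D.xs ≠ []
  y_xs : D.y ∉ D.xs
  ex_pos : ∀ k, k ≤ D.K → 1 ≤ D.ex k
  K_two : 2 ≤ D.K
  big : 100 ≤ D.per
  last : D.last = posL D.xs ∨ (∃ z, z ≠ D.y ∧ D.xs.head? ≠ some z ∧ D.last = (z, false) :: posL D.xs) ∨
    D.last = posL D.xs.tail

theorem mem_posL {l : List α} {a : α × Bool} (h : a ∈ posL l) : a.2 = true ∧ a.1 ∈ l := by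
  simp only [posL, List.mem_map] at h
  obtain ⟨x, h, rfl⟩ := h
  exact ⟨rfl, h⟩

theorem pr_lt (D : BD α) {k : ℕ} (h : k < D.K) : D.pr k = posL D.xs := by simp [pr, h]
theorem pr_K (D : BD α) : D.pr D.K = D.last := by simp [pr]

theorem pr_len_lt (D : BD α) {k : ℕ} (h : k < D.K) : (D.pr k).length = D.xs.length := by
  simp [pr_lt D h, posL]

theorem y_not_pr {D : BD α} (h : D.WF) {k : ℕ} (hk : k ≤ D.K) : ∀ s, (D.y, s) ∉ D.pr k := by
  intro s hm
  rcases Nat.lt_or_ge k D.K with h1 | h1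
  · rw [pr_lt D h1] at hm
    exact h.y_xs (mem_posL hm).2
  · obtain rfl : k = D.K := by omega
    rw [pr_K] at hm
    rcases h.last with e | ⟨z, h1, h2, e⟩ | e
    · rw [e] at hm
      exact h.y_xs (mem_posL hm).2
    · rw [e] at hm
      rcases List.mem_cons.1 hm with h3 | h3
      · exact h1 (Prod.ext_iff.1 h3).1.symm
      · exact h.y_xs (mem_posL h3).2
    · rw [e] at hm
      exact h.y_xs (List.mem_of_mem_tail (mem_posL hm).2)

/-- Location of negative letters. -/
theorem neg_loc {D : BD α} (h : D.WF) (t : ℤ) (ht : (D.seq t).2 = false) :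
    ∃ j : ℤ, t = D.S D.K + j * D.per ∧ ∃ z, z ≠ D.y ∧ D.xs.head? ≠ some z ∧
      D.last = (z, false) :: posL D.xs := by
  obtain ⟨j, k, o, hk, ho, rfl⟩ := D.locate (by have := h.big; omega) t
  rcases Nat.lt_or_ge o (D.pr k).length with h1 | h1
  · have hv := D.val_pr k o j hk h1
    rcases Nat.lt_or_ge k D.K with h2 | h2
    · rw [pr_lt D h2] at hv
      rw [(mem_posL (List.mem_of_getElem? hv)).1] at ht
      cases ht
    · obtain rfl : k = D.K := by omega
      rw [pr_K] at hv
      rcases h.last with e | ⟨z, z1, z2, e⟩ | e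
      · rw [e] at hv
        rw [(mem_posL (List.mem_of_getElem? hv)).1] at ht
        cases ht
      · rcases o with _ | o
        · exact ⟨j, by simp, z, z1, z2, e⟩
        · rw [e, List.getElem?_cons_succ] at hv
          rw [(mem_posL (List.mem_of_getElem? hv)).1] at ht
          cases ht
      · rw [e] at hv
        rw [(mem_posL (List.mem_of_getElem? hv)).1] at ht
        cases ht
  · rw [D.val_y k o j hk h1 ho] at ht
    cases ht

theorem neg_sparse {D : BD α} (h : D.WF) (t t' : ℤ) (ht : (D.seq t).2 = false)
    (ht' : (D.seq t').2 = false) (h1 : t < t') (h2 : t' < t + 100) : False := by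
  obtain ⟨j, rfl, -⟩ := neg_loc h t ht
  obtain ⟨j', rfl, -⟩ := neg_loc h t' ht'
  have hb := h.big
  have h3 : j * D.per < j' * D.per := by omega
  have h4 : j < j' := lt_of_mul_lt_mul_right h3 (by omega)
  have : (j + 1) * D.per ≤ j' * D.per := mul_le_mul_of_nonneg_right (by omega) (by omega)
  rw [add_mul] at this
  omega

theorem seq_red {D : BD α} (h : D.WF) (t : ℤ) : D.seq (t + 1) ≠ bar (D.seq t) := by
  intro e
  have hK := h.K_two
  cases hs : (D.seq t).2
  · obtain ⟨j, rfl, z, z1, z2, z3⟩ := neg_loc h t hs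
    have hx : 0 < D.xs.length := List.length_pos_iff.2 h.xs_ne
    have v0 := D.val_pr D.K 0 j le_rfl (by rw [pr_K, z3]; simp)
    have v1 := D.val_pr D.K 1 j le_rfl (by rw [pr_K, z3]; simp [posL, hx])
    rw [pr_K, z3] at v0 v1
    rw [show (D.S D.K : ℤ) + j * D.per + 1 = D.S D.K + ((1 : ℕ) : ℤ) + j * D.per by push_cast; ring] at e
    rw [show (D.S D.K : ℤ) + j * D.per = D.S D.K + ((0 : ℕ) : ℤ) + j * D.per by push_cast; ring] at e
    rw [e] at v1
    have v0' : (z, false) = _ := Option.some.inj v0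
    rw [← v0'] at v1
    apply z2
    rw [List.head?_eq_getElem?]
    simp only [List.getElem?_cons_succ, posL, List.getElem?_map, bar, Option.map_eq_some_iff] at v1
    obtain ⟨x, v1, v2⟩ := v1
    rw [v1]
    simpa using v2
  · have hs' : (D.seq (t + 1)).2 = false := by rw [e]; simp [bar, hs]
    obtain ⟨j, ht, z, z1, z2, z3⟩ := neg_loc h (t + 1) hs'
    have v0 := D.val_pr D.K 0 j le_rfl (by rw [pr_K, z3]; simp)
    rw [pr_K, z3] at v0
    rw [show (D.S D.K : ℤ) + ((0 : ℕ) : ℤ) + j * D.per = t + 1 by rw [ht]; push_cast; ring, e] at v0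
    obtain ⟨K, hKK⟩ : ∃ K, D.K = K + 1 := ⟨D.K - 1, by omega⟩
    have hex := h.ex_pos K (by omega)
    have v1 := D.val_y K ((D.pr K).length + D.ex K - 1) j (by omega) (by omega) (by omega)
    have hS := D.S_succ K
    rw [← hKK] at hS
    rw [show (D.S K : ℤ) + (((D.pr K).length + D.ex K - 1 : ℕ) : ℤ) + j * D.per = t by omega] at v1
    rw [v1] at v0
    simp [bar] at v0
    exact z1 v0

/-- A maximal run of `y` on `[r, r+e)` in a sequence. -/
def Run (β : ℤ → α × Bool) (y : α) (r : ℤ) (e : ℕ) : Prop :=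
  β (r - 1) ≠ (y, true) ∧ (∀ t, r ≤ t → t < r + e → β t = (y, true)) ∧ β (r + e) ≠ (y, true)

/-- Windows of length `w` contain a standard block and the next letter. -/
theorem window {D : BD α} (h : D.WF) (w : ℤ)
    (hw1 : ∀ k, k + 2 < D.K → (D.S (k + 2) : ℤ) - D.S k < w)
    (hw2 : D.per + D.S 1 - D.S (D.K - 2) < w) (i j : ℤ) (hij : w ≤ j - i) :
    ∃ (k : ℕ) (q : ℤ), k + 1 < D.K ∧ i ≤ D.S k + q * D.per ∧ D.S (k + 1) + q * D.per < j := by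
  have hK := h.K_two
  obtain ⟨q, k, o, hk, ho, ht⟩ := D.locate (by have := h.big; omega) i
  rcases Nat.lt_or_ge (k + 2) D.K with h1 | h1
  · have e1 := D.S_succ k
    refine ⟨k + 1, q, h1, by omega, ?_⟩
    have := hw1 k h1
    rw [show k + 1 + 1 = k + 2 from rfl]
    omega
  · refine ⟨0, q + 1, by omega, ?_, ?_⟩
    · have e1 := D.S_succ k
      have e2 := D.S_mono (show k + 1 ≤ D.K + 1 by omega)
      rw [add_mul]
      unfold per at *
      rw [S_zero]
      omega
    · have e1 := D.S_mono (show D.K - 2 ≤ k by omega)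
      rw [add_mul, zero_add]
      omega

/-- The run of a standard block. -/
theorem std_run {D : BD α} (h : D.WF) (k : ℕ) (q : ℤ) (hk : k + 1 < D.K) :
    Run D.seq D.y (D.S k + D.xs.length + q * D.per) (D.ex k) := by
  have hx : 0 < D.xs.length := List.length_pos_iff.2 h.xs_ne
  have hl := D.pr_len_lt (k := k) (by omega)
  have hl1 := D.pr_len_lt hk
  refine ⟨?_, ?_, ?_⟩
  · have := D.val_pr k (D.xs.length - 1) q (by omega) (by omega)
    rw [show (D.S k : ℤ) + ((D.xs.length - 1 : ℕ) : ℤ) + q * D.per =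
      D.S k + D.xs.length + q * D.per - 1 by omega] at this
    intro e
    rw [e] at this
    exact y_not_pr h (by omega) _ (List.mem_of_getElem? this)
  · intro t h1 h2
    have := D.val_y k (t - D.S k - q * D.per).toNat q (by omega) (by omega) (by omega)
    rw [← this]
    congr 1
    omega
  · have := D.val_pr (k + 1) 0 q (by omega) (by omega)
    have hS := D.S_succ k
    rw [show (D.S (k + 1) : ℤ) + ((0 : ℕ) : ℤ) + q * D.per =
      D.S k + D.xs.length + q * D.per + D.ex k by omega] at this
    intro e
    rw [e] at this
    exact y_not_pr h (by omega) _ (List.mem_of_getElem? this)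

/-- Classification of runs. -/
theorem class_run {D : BD α} (h : D.WF) (y : α) (r : ℤ) (e : ℕ) (he : 2 ≤ e)
    (hy : ∀ k, k ≤ D.K → (y, true) ∈ D.pr k → (D.pr k).length = 1) (hr : Run D.seq y r e) :
    y = D.y ∧ ∃ (k : ℕ) (q : ℤ), k ≤ D.K ∧ r = D.S k + (D.pr k).length + q * D.per ∧
      (e = D.ex k ∨ (D.last = [] ∧ e = D.ex (D.K - 1) + D.ex D.K)) := by
  obtain ⟨r1, r2, r3⟩ := hr
  have hK := h.K_two
  have hx : 0 < D.xs.length := List.length_pos_iff.2 h.xs_ne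
  obtain ⟨q, k, o, hk, ho, ht⟩ := D.locate (by have := h.big; omega) r
  have hex := h.ex_pos k hk
  have v := r2 r le_rfl (by omega)
  rcases Nat.lt_or_ge o (D.pr k).length with h1 | h1
  · exfalso
    have hv := D.val_pr k o q hk h1
    rw [← ht, v] at hv
    have hm := List.mem_of_getElem? hv
    have hl := hy k hk hm
    have v2 := r2 (r + 1) (by omega) (by omega)
    have v3 := D.val_y k 1 q hk (by omega) (by omega)
    rw [show (D.S k : ℤ) + ((1 : ℕ) : ℤ) + q * D.per = r + 1 by omega, v2] at v3
    have : y = D.y := (Prod.ext_iff.1 v3).1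
    rw [this] at hm
    exact y_not_pr h hk _ hm
  · have hv := D.val_y k o q hk h1 ho
    rw [← ht, v] at hv
    have hyy : y = D.y := (Prod.ext_iff.1 hv).1
    refine ⟨hyy, k, q, hk, ?_⟩
    have ho2 : o = (D.pr k).length := by
      by_contra hne
      apply r1
      have := D.val_y k (o - 1) q hk (by omega) (by omega)
      rw [hyy, ← this]
      congr 1
      omega
    refine ⟨by rw [ht, ho2], ?_⟩
    have hge : D.ex k ≤ e := by
      by_contra hlt
      apply r3
      have := D.val_y k (o + e) q hk (by omega) (by omega)
      rw [hyy, ← this]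
      congr 1
      push_cast
      omega
    rcases Nat.eq_or_lt_of_le hge with h2 | h2
    · exact Or.inl h2.symm
    right
    have hS := D.S_succ k
    -- the next block
    have vn := r2 (r + D.ex k) (by omega) (by omega)
    rw [hyy] at vn
    have no0 : ∀ q' : ℤ, D.seq (D.S 0 + q' * D.per) ≠ (D.y, true) := by
      intro q' e
      have := D.val_pr 0 0 q' (by omega) (by rw [D.pr_len_lt (by omega)]; exact hx)
      rw [Nat.cast_zero, add_zero, e] at this
      exact y_not_pr h (by omega) _ (List.mem_of_getElem? this)
    have hkK : k < D.K := by
      by_contra hkK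
      obtain rfl : k = D.K := by omega
      apply no0 (q + 1)
      rw [← vn]
      congr 1
      rw [S_zero, add_mul]
      unfold per at *
      omega
    have vn2 := D.val_pr (k + 1) 0 q (by omega)
    have hl0 : (D.pr (k + 1)).length = 0 := by
      by_contra hpos
      have := vn2 (by omega)
      rw [show (D.S (k + 1) : ℤ) + ((0 : ℕ) : ℤ) + q * D.per = r + D.ex k by omega, vn] at this
      exact y_not_pr h (by omega) _ (List.mem_of_getElem? this)
    have hk1 : k + 1 = D.K := by
      by_contra hne
      have := D.pr_len_lt (show k + 1 < D.K by omega)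
      omega
    have hS1 := D.S_succ (k + 1)
    have hek : k = D.K - 1 := by omega
    rw [hk1] at hl0 hS1 hS
    rw [← hek]
    refine ⟨by rw [← pr_K]; exact List.length_eq_zero_iff.1 hl0, ?_⟩
    have hge2 : D.ex k + D.ex D.K ≤ e := by
      by_contra hlt
      apply r3
      have := D.val_y D.K (e - D.ex k) q le_rfl (by omega) (by omega)
      rw [hyy, ← this]
      congr 1
      omega
    rcases Nat.eq_or_lt_of_le hge2 with h3 | h3
    · exact h3.symm
    · exfalso
      have := r2 (r + D.ex k + D.ex D.K) (by omega) (by omega)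
      apply no0 (q + 1)
      rw [← hyy, ← this]
      congr 1
      rw [S_zero, add_mul]
      unfold per at *
      omega

/-- Rigidity of sequences. -/
theorem rigid {D D' : BD α} (h : D.WF) (h' : D'.WF) (w : ℤ)
    (hw1 : ∀ k, k + 2 < D.K → (D.S (k + 2) : ℤ) - D.S k < w)
    (hw2 : D.per + D.S 1 - D.S (D.K - 2) < w)
    (hex : ∀ k, k + 1 < D.K → 2 ≤ D.ex k)
    (hy : ∀ k, k ≤ D'.K → (D.y, true) ∈ D'.pr k → (D'.pr k).length = 1)
    (hsame : ∀ k k', D.y = D'.y → k + 1 < D.K → k' ≤ D'.K → D.ex k = D'.ex k' →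
      D.K = D'.K ∧ D.ex = D'.ex ∧ k = k' ∧ D.xs.length = D'.xs.length)
    (hmerge : ∀ k, D.y = D'.y → D'.last = [] → k + 1 < D.K → D.ex k ≠ D'.ex (D'.K - 1) + D'.ex D'.K)
    (hxs : D.y = D'.y → D.ex = D'.ex → D.xs = D'.xs → D.last = D'.last)
    (i j d : ℤ) (hij : w ≤ j - i) (hag : ∀ t, i ≤ t → t < j → D.seq t = D'.seq (t + d)) :
    (∀ t, D.seq t = D'.seq (t + d)) ∧ D.per = D'.per := by
  obtain ⟨k, q, hk, hi, hj⟩ := window h w hw1 hw2 i j hij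
  have hx : 0 < D.xs.length := List.length_pos_iff.2 h.xs_ne
  have hl := D.pr_len_lt (k := k) (by omega)
  have hS := D.S_succ k
  obtain ⟨r1, r2, r3⟩ := std_run h k q hk
  have hr' : Run D'.seq D.y (D.S k + D.xs.length + q * D.per + d) (D.ex k) := by
    refine ⟨?_, ?_, ?_⟩
    · rw [hag _ (by omega) (by omega)] at r1
      convert r1 using 2
      ring
    · intro t ht1 ht2
      have := r2 (t - d) (by omega) (by omega)
      rw [hag _ (by omega) (by omega), sub_add_cancel] at this
      exact this
    · rw [hag _ (by omega) (by omega)] at r3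
      convert r3 using 2
      ring
  obtain ⟨hyy, k', q', hk', hr, he⟩ := class_run h' D.y _ _ (hex k hk) hy hr'
  rcases he with he | he
  swap
  · exact (hmerge k hyy he.1 hk he.2).elim
  obtain ⟨e1, e2, rfl, e4⟩ := hsame k k' hyy hk hk' he
  have hl' := D'.pr_len_lt (k := k) (by omega)
  have hxx : D.xs = D'.xs := by
    have hp : posL D.xs = posL D'.xs := by
      apply List.ext_getElem?
      intro o
      rcases Nat.lt_or_ge o D.xs.length with ho | ho
      · have v := D.val_pr k o q (by omega) (by omega)
        have v' := D'.val_pr k o q' (by omega) (by omega)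
        rw [D.pr_lt (by omega)] at v
        rw [D'.pr_lt (by omega)] at v'
        rw [v, v', hag _ (by omega) (by omega)]
        congr 2
        omega
      · rw [List.getElem?_eq_none (by simp [posL]; omega), List.getElem?_eq_none (by simp [posL]; omega)]
    unfold posL at hp
    exact List.map_injective_iff.2 (fun a b hab => (Prod.ext_iff.1 hab).1) hp
  have hDD : D = D' := by
    have := hxs hyy e2 hxx
    cases D; cases D'
    simp only at hyy e1 e2 hxx this
    subst hyy e1 e2 hxx this
    rfl
  subst hDD
  refine ⟨fun t => ?_, rfl⟩
  rw [show d = (q' - q) * D.per by rw [sub_mul]; omega, seq_per]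

end BD
end SmallCanc

namespace SmallCanc
open FreeGroup

/-- Shifts and reflections of a base family. -/
def Om {α : Type} (B : (ℤ → α × Bool) → ℤ → Prop) (ρ : ℤ → α × Bool) (π : ℤ) : Prop :=
  ∃ β, B β π ∧ ∃ c : ℤ, ρ = (fun k => β (k + c)) ∨ ρ = rev c β

theorem sc_of_base {α : Type} (B : (ℤ → α × Bool) → ℤ → Prop)
    (hper : ∀ β π, B β π → ∀ k, β (k + π) = β k)
    (hred : ∀ β π, B β π → ∀ k, β (k + 1) ≠ bar (β k))
    (hbig : ∀ β π, B β π → 100 ≤ π)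
    (hsp : ∀ β π, B β π → ∀ t t', (β t).2 = false → (β t').2 = false → t < t' → t' < t + 100 → False)
    (hsm : ∀ β π β' π' i j d, B β π → B β' π' → (∀ t, i ≤ t → t < j → β t = β' (t + d)) →
      π ≤ 20 * (j - i) → (∀ t, β t = β' (t + d)) ∧ π = π') : SC (Om B) := by
  have hmix : ∀ β π β' π', B β π → B β' π' → ∀ i c c' : ℤ,
      (∀ k, i ≤ k → k < i + 3 → β (k + c) = rev c' β' k) → False := by
    intro β π β' π' hβ hβ' i c c' h
    have h0 := h i (by omega) (by omega)
    have h1 := h (i + 1) (by omega) (by omega)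
    have h2 := h (i + 2) (by omega) (by omega)
    simp only [rev, bar, Prod.ext_iff] at h0 h1 h2
    have a1 := hsp _ _ hβ (i + c) (i + 1 + c)
    have a2 := hsp _ _ hβ (i + c) (i + 2 + c)
    have a3 := hsp _ _ hβ (i + 1 + c) (i + 2 + c)
    have b1 := hsp _ _ hβ' (c' - 1 - (i + 1)) (c' - 1 - i)
    have b2 := hsp _ _ hβ' (c' - 1 - (i + 2)) (c' - 1 - i)
    have b3 := hsp _ _ hβ' (c' - 1 - (i + 2)) (c' - 1 - (i + 1))
    rw [h0.2, h1.2] at a1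
    rw [h0.2, h2.2] at a2
    rw [h1.2, h2.2] at a3
    cases e0 : (β' (c' - 1 - i)).2 <;> cases e1 : (β' (c' - 1 - (i + 1))).2 <;>
      cases e2 : (β' (c' - 1 - (i + 2))).2 <;> simp only [e0, e1, e2] at a1 a2 a3 b1 b2 b3
    · exact b1 (by trivial) (by trivial) (by omega) (by omega)
    · exact b1 (by trivial) (by trivial) (by omega) (by omega)
    · exact b2 (by trivial) (by trivial) (by omega) (by omega)
    · exact a3 (by trivial) (by trivial) (by omega) (by omega)
    · exact b3 (by trivial) (by trivial) (by omega) (by omega)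
    · exact a2 (by trivial) (by trivial) (by omega) (by omega)
    · exact a1 (by trivial) (by trivial) (by omega) (by omega)
    · exact a1 (by trivial) (by trivial) (by omega) (by omega)
  refine ⟨?_, ?_, ?_, ?_, ?_, ?_⟩
  · rintro ρ π c ⟨β, hβ, c', h | h⟩
    · refine ⟨β, hβ, c + c', Or.inl ?_⟩
      funext k
      rw [h]
      simp only
      congr 1
      ring
    · refine ⟨β, hβ, c' - c, Or.inr ?_⟩
      funext k
      rw [h]
      simp only [rev]
      congr 2
      ring
  · rintro ρ π ⟨β, hβ, c', h | h⟩
    · refine ⟨β, hβ, c', Or.inr ?_⟩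
      funext k
      rw [h]
      simp only [rev]
      congr 2
      ring
    · refine ⟨β, hβ, c', Or.inl ?_⟩
      funext k
      rw [h]
      simp only [rev, bar_bar]
      congr 1
      ring
  · rintro ρ π ⟨β, hβ, c', h | h⟩ k
    · rw [h]
      simp only
      rw [← hper _ _ hβ (k + c')]
      congr 1
      ring
    · rw [h]
      simp only [rev]
      rw [← hper _ _ hβ (c' - 1 - (k + π))]
      congr 2
      ring
  · rintro ρ π ⟨β, hβ, c', h | h⟩ k
    · rw [h]
      simp only
      rw [show k + 1 + c' = k + c' + 1 by ring]
      exact hred _ _ hβ _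
    · rw [h]
      simp only [rev, bar_bar]
      intro e
      apply hred _ _ hβ (c' - 1 - (k + 1))
      rw [e]
      congr 1
      ring
  · rintro ρ π ⟨β, hβ, -⟩
    exact hbig _ _ hβ
  · rintro ρ π ρ' π' i j ⟨β, hβ, c, h⟩ ⟨β', hβ', c', h'⟩ hag hij
    have hb := hbig _ _ hβ
    rcases h with h | h <;> rcases h' with h' | h'
    · subst h h'
      obtain ⟨h1, h2⟩ := hsm β π β' π' (i + c) (j + c) (c' - c) hβ hβ' (fun t ht1 ht2 => by
        have := hag (t - c) (by omega) (by omega)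
        simp only [sub_add_cancel] at this
        rw [this]
        congr 1
        ring) (by omega)
      refine ⟨?_, h2⟩
      funext k
      rw [h1]
      congr 1
      ring
    · exfalso
      subst h h'
      exact hmix β π β' π' hβ hβ' i c c' (fun k hk1 hk2 => hag k hk1 (by omega))
    · exfalso
      subst h h'
      exact hmix β' π' β π hβ' hβ i c' c (fun k hk1 hk2 => (hag k hk1 (by omega)).symm)
    · subst h h'
      obtain ⟨h1, h2⟩ := hsm β π β' π' (c - j) (c - i) (c' - c) hβ hβ' (fun t ht1 ht2 => by
        have := bar_inj (hag (c - 1 - t) (by omega) (by omega))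
        rw [show c - 1 - (c - 1 - t) = t by ring] at this
        rw [this]
        congr 1
        ring) (by omega)
      refine ⟨?_, h2⟩
      funext k
      simp only [rev]
      rw [h1]
      congr 2
      ring

/-- chain exponents -/
def cExp (lo k : ℕ) : ℕ := if k < 999 then (lo + k + 2) ^ 2 else (lo + 1) ^ 2
/-- `w` exponents -/
def wExp (m k : ℕ) : ℕ := if k < 99 then 100 * m + k + 2 else 100 * m + 1

/-- chain data -/
def chainBD {α : Type} (x y : α) (lo : ℕ) : BD α := ⟨y, [x], 999, cExp lo, posL [x]⟩

/-- `w` data -/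
def wBD {α : Type} (y : α) (xs : List α) (m : ℕ) (last : List (α × Bool)) : BD α :=
  ⟨y, xs, 99, wExp m, last⟩

theorem chain_pr {α : Type} (x y : α) (lo k : ℕ) : (chainBD x y lo).pr k = [(x, true)] := by
  unfold BD.pr chainBD
  split_ifs <;> rfl

theorem chain_S {α : Type} (x y : α) (lo n : ℕ) (hn : n ≤ 999) :
    6 * ((chainBD x y lo).S n : ℤ) = 6 * n + 6 * n * (lo + 2) ^ 2 + 6 * (lo + 2) * n * (n - 1) +
      (n - 1) * n * (2 * n - 1) := by
  induction n with
  | zero => simp [BD.S_zero]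
  | succ n ih =>
    have hex : (chainBD x y lo).ex n = (lo + n + 2) ^ 2 := by
      simp only [chainBD, cExp]
      rw [if_pos (by omega)]
    rw [BD.S_succ, chain_pr, hex]
    have := ih (by omega)
    push_cast
    rw [mul_add, this]
    simp only [List.length_cons, List.length_nil]
    push_cast
    ring

theorem cExp_le (lo k : ℕ) (hk : k ≤ 999) : cExp lo k ≤ (lo + 1000) ^ 2 := by
  unfold cExp
  split_ifs <;> exact Nat.pow_le_pow_left (by omega) 2

theorem chain_step {α : Type} (x y : α) (lo k : ℕ) (hk : k ≤ 999) :
    (chainBD x y lo).S (k + 1) ≤ (chainBD x y lo).S k + (1 + (lo + 1000) ^ 2) := by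
  rw [BD.S_succ, chain_pr]
  have := cExp_le lo k hk
  change _ + (1 + cExp lo k) ≤ _
  omega

theorem chain_gap {α : Type} (x y : α) (lo : ℕ) :
    (∀ k, k + 2 < (chainBD x y lo).K → ((chainBD x y lo).S (k + 2) : ℤ) - (chainBD x y lo).S k <
      4 * (1 + (lo + 1000) ^ 2) + 1) ∧
    (chainBD x y lo).per + (chainBD x y lo).S 1 - (chainBD x y lo).S ((chainBD x y lo).K - 2) <
      4 * (1 + (lo + 1000) ^ 2) + 1 := by
  have hK : (chainBD x y lo).K = 999 := rfl
  have hc : (((lo + 1000) ^ 2 : ℕ) : ℤ) = ((lo : ℤ) + 1000) ^ 2 := by push_cast; rfl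
  have hnn : 0 ≤ ((lo : ℤ) + 1000) ^ 2 := by positivity
  constructor
  · intro k hk
    rw [hK] at hk
    have h1 := chain_step x y lo k (by omega)
    have h2 := chain_step x y lo (k + 1) (by omega)
    rw [show k + 1 + 1 = k + 2 from rfl] at h2
    omega
  · have h1 := chain_step x y lo 997 (by omega)
    have h2 := chain_step x y lo 998 (by omega)
    have h3 := chain_step x y lo 999 (by omega)
    have h4 := chain_step x y lo 0 (by omega)
    rw [BD.S_zero] at h4
    unfold BD.per
    rw [hK, show 999 - 2 = 997 from rfl]
    rw [show 0 + 1 = 1 from rfl] at h4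
    rw [show 997 + 1 = 998 from rfl] at h1
    rw [show 998 + 1 = 999 from rfl] at h2
    generalize (chainBD x y lo).S (999 + 1) = s1000 at *
    generalize (chainBD x y lo).S 999 = s999 at *
    generalize (chainBD x y lo).S 998 = s998 at *
    generalize (chainBD x y lo).S 997 = s997 at *
    generalize (chainBD x y lo).S 1 = s1 at *
    rw [← hc]
    omega

theorem chain_per {α : Type} (x y : α) (lo : ℕ) :
    20 * (4 * (1 + ((lo : ℤ) + 1000) ^ 2) + 1) ≤ (chainBD x y lo).per := by
  have h1 := chain_S x y lo 999 le_rfl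
  have hK : (chainBD x y lo).K = 999 := rfl
  have h2 := (chainBD x y lo).S_mono (Nat.le_succ (chainBD x y lo).K)
  have h3 : ((chainBD x y lo).S 999 : ℤ) ≤ (chainBD x y lo).per := by
    unfold BD.per
    rw [hK] at h2 ⊢
    exact Int.ofNat_le.mpr h2
  push_cast at h1
  have h4 : (0 : ℤ) ≤ lo := Int.natCast_nonneg lo
  generalize (chainBD x y lo).S 999 = s at *
  clear h2 hK
  nlinarith

theorem chain_wf {α : Type} (x y : α) (lo : ℕ) (hxy : y ≠ x) : (chainBD x y lo).WF where
  xs_ne := by simp [chainBD]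
  y_xs := by simpa [chainBD] using hxy
  ex_pos := by
    intro k _
    simp only [chainBD, cExp]
    split_ifs <;> exact Nat.one_le_pow _ _ (by omega)
  K_two := by simp [chainBD]
  big := by
    have := chain_per x y lo
    nlinarith
  last := Or.inl rfl

theorem w_S {α : Type} (y : α) (xs : List α) (m : ℕ) (last : List (α × Bool)) (n : ℕ) (hn : n ≤ 99) :
    2 * ((wBD y xs m last).S n : ℤ) = n * (2 * xs.length + 200 * m + 4) + n * (n - 1) := by
  induction n with
  | zero => simp [BD.S_zero]
  | succ n ih =>
    have hex : (wBD y xs m last).ex n = 100 * m + n + 2 := by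
      simp only [wBD, wExp]
      rw [if_pos (by omega)]
    rw [BD.S_succ, hex, BD.pr_len_lt _ (by change n < 99; omega)]
    have := ih (by omega)
    push_cast
    rw [mul_add, this]
    simp only [wBD]
    ring

theorem w_gap {α : Type} (y : α) (xs : List α) (m : ℕ) (hm : 1 ≤ m) (last : List (α × Bool))
    (h1 : xs.length ≤ last.length + 1) (h2 : last.length ≤ xs.length + 1) :
    (∀ k, k + 2 < (wBD y xs m last).K → 20 * (((wBD y xs m last).S (k + 2) : ℤ) - (wBD y xs m last).S k) <
      (wBD y xs m last).per) ∧
    20 * ((wBD y xs m last).per + (wBD y xs m last).S 1 - (wBD y xs m last).S ((wBD y xs m last).K - 2)) <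
      (wBD y xs m last).per ∧ 100 ≤ (wBD y xs m last).per := by
  have hK : (wBD y xs m last).K = 99 := rfl
  have h99 := w_S y xs m last 99 le_rfl
  have hl : (wBD y xs m last).S (99 + 1) = (wBD y xs m last).S 99 + (last.length + (100 * m + 1)) := by
    rw [BD.S_succ]
    rfl
  have h97 := w_S y xs m last 97 (by omega)
  have h11 := w_S y xs m last 1 (by omega)
  unfold BD.per
  rw [hK]
  push_cast at h99 h97 h11
  refine ⟨?_, ?_, ?_⟩
  · intro k hk
    have a1 := w_S y xs m last k (by omega)
    have a2 := w_S y xs m last (k + 2) (by omega)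
    push_cast at a2
    have a3 : 2 * ((wBD y xs m last).S (k + 2) : ℤ) - 2 * (wBD y xs m last).S k =
      2 * (2 * xs.length + 200 * m + 4) + 4 * k + 2 := by rw [a1, a2]; ring
    omega
  · norm_num at h97 h99 h11 hl ⊢
    omega
  · norm_num at h97 h99 h11 hl ⊢
    omega

end SmallCanc

namespace SmallCanc
open FreeGroup

/-- Long windows are not constant. -/
theorem not_const {α : Type} {D : BD α} (h : D.WF) (w : ℤ)
    (hw1 : ∀ k, k + 2 < D.K → (D.S (k + 2) : ℤ) - D.S k < w)
    (hw2 : D.per + D.S 1 - D.S (D.K - 2) < w) (i j : ℤ) (hij : w ≤ j - i) (z : α × Bool)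
    (hz : ∀ t, i ≤ t → t < j → D.seq t = z) : False := by
  obtain ⟨k, q, hk, hi, hj⟩ := BD.window h w hw1 hw2 i j hij
  have hx : 0 < D.xs.length := List.length_pos_iff.2 h.xs_ne
  have hl := D.pr_len_lt (k := k) (by omega)
  have hS := D.S_succ k
  have he := h.ex_pos k (by omega)
  have v1 := D.val_pr k 0 q (by omega) (by omega)
  have v2 := D.val_y k (D.xs.length) q (by omega) (by omega) (by omega)
  rw [hz _ (by push_cast; omega) (by push_cast; omega)] at v1
  rw [hz _ (by omega) (by omega)] at v2
  rw [v2] at v1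
  exact BD.y_not_pr h (k := k) (by omega) true (List.mem_of_getElem? v1)

/-- Admissible chain parameters. -/
def CH {A : Type} (x y : GenSym A) (lo : ℕ) : Prop :=
  (lo = 0 ∧ (∃ a, x = GenSym.elt a) ∧ (y = GenSym.c ∨ y = GenSym.d)) ∨
  (lo = 1000 ∧ x = GenSym.b ∧ (y = GenSym.f1 ∨ y = GenSym.f2)) ∨
  (lo = 2000 ∧ x = GenSym.c ∧ (y = GenSym.f1 ∨ y = GenSym.f2)) ∨
  (lo = 3000 ∧ x = GenSym.d ∧ (y = GenSym.f1 ∨ y = GenSym.f2)) ∨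
  (lo = 4000 ∧ ((x = GenSym.f1 ∧ y = GenSym.f2) ∨ (x = GenSym.f2 ∧ y = GenSym.f1)))

theorem CH.facts {A : Type} {x y : GenSym A} {lo : ℕ} (h : CH x y lo) :
    (∃ q, lo = 1000 * q ∧ q ≤ 4) ∧ y ≠ x ∧ y ≠ GenSym.b ∧ ∀ a, y ≠ GenSym.elt a := by
  rcases h with ⟨rfl, ⟨a, rfl⟩, rfl | rfl⟩ | ⟨rfl, rfl, rfl | rfl⟩ | ⟨rfl, rfl, rfl | rfl⟩ |
    ⟨rfl, rfl, rfl | rfl⟩ | ⟨rfl, ⟨rfl, rfl⟩ | ⟨rfl, rfl⟩⟩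
  all_goals
    refine ⟨?_, by simp, by simp, by simp⟩
  · exact ⟨0, rfl, by omega⟩
  · exact ⟨0, rfl, by omega⟩
  · exact ⟨1, rfl, by omega⟩
  · exact ⟨1, rfl, by omega⟩
  · exact ⟨2, rfl, by omega⟩
  · exact ⟨2, rfl, by omega⟩
  · exact ⟨3, rfl, by omega⟩
  · exact ⟨3, rfl, by omega⟩
  · exact ⟨4, rfl, by omega⟩
  · exact ⟨4, rfl, by omega⟩

/-- The letters of the arguments. -/
def XS {A : Type} {n : ℕ} (as : Fin n → A) : List (GenSym A) := List.ofFn fun i => GenSym.elt (as i)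

open Classical in
/-- The last prefix of a `w`-relator. -/
noncomputable def lastOf (S : IndexedStructure) (m : ℕ) (as : Fin (S.arity m) → S.A) :
    List (GenSym S.A × Bool) :=
  if S.isFunc m then
    if (XS as).head? = some (GenSym.elt (S.funcInterp m as)) then posL (XS as).tail
    else (GenSym.elt (S.funcInterp m as), false) :: posL (XS as)
  else posL (XS as)

/-- Admissible block data. -/
inductive Adm (S : IndexedStructure) : BD (GenSym S.A) → Prop
  | chain (x y : GenSym S.A) (lo : ℕ) (h : CH x y lo) : Adm S (chainBD x y lo)
  | w (m : ℕ) (hm : 1 ≤ m) (as : Fin (S.arity m) → S.A) :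
      Adm S (wBD GenSym.b (XS as) m (lastOf S m as))

theorem mem_XS {A : Type} {n : ℕ} {as : Fin n → A} {z : GenSym A} (h : z ∈ XS as) :
    ∃ a, z = GenSym.elt a := by
  simp only [XS, List.mem_ofFn] at h
  obtain ⟨i, rfl⟩ := h
  exact ⟨_, rfl⟩

theorem XS_len {A : Type} {n : ℕ} (as : Fin n → A) : (XS as).length = n := by simp [XS]

theorem lastOf_cases (S : IndexedStructure) (m : ℕ) (as : Fin (S.arity m) → S.A) :
    lastOf S m as = posL (XS as) ∨
    (∃ z, z ≠ GenSym.b ∧ (XS as).head? ≠ some z ∧ lastOf S m as = (z, false) :: posL (XS as)) ∨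
    lastOf S m as = posL (XS as).tail := by
  unfold lastOf
  split_ifs with h1 h2
  · exact Or.inr (Or.inr rfl)
  · exact Or.inr (Or.inl ⟨_, by simp, h2, rfl⟩)
  · exact Or.inl rfl

theorem lastOf_mem (S : IndexedStructure) (m : ℕ) (as : Fin (S.arity m) → S.A)
    {z : GenSym S.A × Bool} (h : z ∈ lastOf S m as) : ∃ a, z.1 = GenSym.elt a := by
  unfold lastOf at h
  split_ifs at h with h1 h2
  · exact mem_XS (List.mem_of_mem_tail (BD.mem_posL h).2)
  · rcases List.mem_cons.1 h with h | h
    · exact ⟨_, by rw [h]⟩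
    · exact mem_XS (BD.mem_posL h).2
  · exact mem_XS (BD.mem_posL h).2

theorem lastOf_len (S : IndexedStructure) (m : ℕ) (as : Fin (S.arity m) → S.A) :
    (XS as).length ≤ (lastOf S m as).length + 1 ∧ (lastOf S m as).length ≤ (XS as).length + 1 := by
  rcases lastOf_cases S m as with h | ⟨z, -, -, h⟩ | h <;> rw [h] <;> simp [posL] <;> omega

/-- Well-formed with small gaps. -/
structure Good {α : Type} (D : BD α) : Prop where
  wf : D.WF
  gap1 : ∀ k, k + 2 < D.K → 20 * ((D.S (k + 2) : ℤ) - D.S k) < D.per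
  gap2 : 20 * (D.per + D.S 1 - D.S (D.K - 2)) < D.per

theorem Adm.good {S : IndexedStructure} {D : BD (GenSym S.A)} (h : Adm S D) : Good D := by
  cases h with
  | chain x y lo h =>
    obtain ⟨g1, g2⟩ := chain_gap x y lo
    have g3 := chain_per x y lo
    refine ⟨chain_wf x y lo h.facts.2.1, ?_, ?_⟩
    · intro k hk
      have := g1 k hk
      linarith
    · linarith
  | w m hm as =>
    obtain ⟨l1, l2⟩ := lastOf_len S m as
    obtain ⟨g1, g2, g3⟩ := w_gap GenSym.b (XS as) m hm (lastOf S m as) l1 l2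
    refine ⟨⟨?_, ?_, ?_, ?_, g3, ?_⟩, g1, g2⟩
    · change XS as ≠ []
      have := XS_len as
      have h1 := S.arity_pos m hm
      intro h0
      rw [h0] at this
      simp at this
      omega
    · intro hb
      obtain ⟨a, ha⟩ := mem_XS hb
      cases ha
    · intro k _
      simp only [wBD, wExp]
      split_ifs <;> omega
    · simp [wBD]
    · exact lastOf_cases S m as

theorem cExp_eq {q q' k k' : ℕ} (hk : k ≤ 999) (hk' : k' ≤ 999)
    (h : cExp (1000 * q) k = cExp (1000 * q') k') : q = q' ∧ k = k' := by
  unfold cExp at h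
  split_ifs at h <;> have := Nat.pow_left_injective (n := 2) (by omega) h <;> constructor <;> omega

theorem wExp_eq {m m' k k' : ℕ} (hk : k ≤ 99) (hk' : k' ≤ 99)
    (h : wExp m k = wExp m' k') : m = m' ∧ k = k' := by
  unfold wExp at h
  split_ifs at h <;> constructor <;> omega

theorem w_pr_mem {S : IndexedStructure} {m : ℕ} {as : Fin (S.arity m) → S.A} {k : ℕ}
    {z : GenSym S.A × Bool} (h : z ∈ (wBD GenSym.b (XS as) m (lastOf S m as)).pr k) :
    ∃ a, z.1 = GenSym.elt a := by
  unfold BD.pr at h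
  split_ifs at h
  · exact mem_XS (BD.mem_posL h).2
  · exact lastOf_mem S m as h

theorem XS_inj {A : Type} {n : ℕ} {as as' : Fin n → A} (h : XS as = XS as') : as = as' := by
  have := List.ofFn_injective h
  funext i
  exact GenSym.elt.inj (congrFun this i)

theorem adm_rigid {S : IndexedStructure} {D D' : BD (GenSym S.A)} (hD : Adm S D) (hD' : Adm S D')
    (i j d : ℤ) (hag : ∀ t, i ≤ t → t < j → D.seq t = D'.seq (t + d)) (hp : D.per ≤ 20 * (j - i)) :
    (∀ t, D.seq t = D'.seq (t + d)) ∧ D.per = D'.per := by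
  have g := hD.good
  have g' := hD'.good
  refine BD.rigid g.wf g'.wf (j - i) (fun k hk => ?_) ?_ ?_ ?_ ?_ ?_ ?_ i j d le_rfl hag
  · have := g.gap1 k hk
    omega
  · have := g.gap2
    omega
  · intro k hk
    cases hD with
    | chain x y lo h =>
      change 2 ≤ cExp lo k
      change k + 1 < 999 at hk
      unfold cExp
      rw [if_pos (by omega)]
      exact le_trans (by omega) (Nat.pow_le_pow_left (show 2 ≤ lo + k + 2 by omega) 2)
    | w m hm as =>
      change 2 ≤ wExp m k
      unfold wExp
      split_ifs <;> omega
  · intro k hk hmem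
    cases hD' with
    | chain x y lo h => rw [chain_pr]; rfl
    | w m hm as =>
      exfalso
      obtain ⟨a, ha⟩ := w_pr_mem hmem
      cases hD with
      | chain x y lo h => exact h.facts.2.2.2 a ha
      | w m hm as => cases ha
  · intro k k' hy hk hk' he
    cases hD with
    | chain x y lo h =>
      cases hD' with
      | chain x' y' lo' h' =>
        obtain ⟨q, rfl, -⟩ := h.facts.1
        obtain ⟨q', rfl, -⟩ := h'.facts.1
        change k + 1 < 999 at hk
        obtain ⟨rfl, rfl⟩ := cExp_eq (by omega) hk' he
        exact ⟨rfl, rfl, rfl, rfl⟩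
      | w m hm as => exact absurd hy h.facts.2.2.1
    | w m hm as =>
      cases hD' with
      | chain x' y' lo' h' => exact absurd hy.symm h'.facts.2.2.1
      | w m' hm' as' =>
        change k + 1 < 99 at hk
        obtain ⟨rfl, rfl⟩ := wExp_eq (by omega) hk' he
        exact ⟨rfl, rfl, rfl, by change (XS as).length = (XS as').length; rw [XS_len, XS_len]⟩
  · intro k hy hl hk
    cases hD' with
    | chain x' y' lo' h' => cases hl
    | w m' hm' as' =>
      cases hD with
      | chain x y lo h => exact absurd hy h.facts.2.2.1
      | w m hm as =>
        change k + 1 < 99 at hk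
        change wExp m k ≠ wExp m' 98 + wExp m' 99
        unfold wExp
        rw [if_pos (by omega), if_pos (by omega), if_neg (by omega)]
        omega
  · intro hy he hx
    cases hD with
    | chain x y lo h =>
      cases hD' with
      | chain x' y' lo' h' =>
        cases hx
        rfl
      | w m hm as => exact absurd hy h.facts.2.2.1
    | w m hm as =>
      cases hD' with
      | chain x' y' lo' h' => exact absurd hy.symm h'.facts.2.2.1
      | w m' hm' as' =>
        have : wExp m 0 = wExp m' 0 := congrFun he 0
        obtain ⟨rfl, -⟩ := wExp_eq (by omega) (by omega) this
        have := XS_inj hx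
        subst this
        rfl

/-- The base family. -/
def Base (S : IndexedStructure) (p₁ p₂ : ℕ) (β : ℤ → GenSym S.A × Bool) (π : ℤ) : Prop :=
  (∃ D, Adm S D ∧ β = D.seq ∧ π = D.per) ∨
  (β = (fun _ => (GenSym.f1, true)) ∧ π = p₁) ∨ (β = (fun _ => (GenSym.f2, true)) ∧ π = p₂)

theorem adm_pow {S : IndexedStructure} {D : BD (GenSym S.A)} (hD : Adm S D) (i j : ℤ)
    (hij : 400000000 ≤ j - i) (z : GenSym S.A) (hz : z = GenSym.f1 ∨ z = GenSym.f2)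
    (hag : ∀ t, i ≤ t → t < j → D.seq t = (z, true)) : False := by
  have g := hD.good
  cases hD with
  | chain x y lo h =>
    obtain ⟨q, hq, hq4⟩ := h.facts.1
    obtain ⟨g1, g2⟩ := chain_gap x y lo
    have hb : (4 * (1 + ((lo : ℤ) + 1000) ^ 2) + 1) ≤ j - i := by
      have : (lo : ℤ) ≤ 4000 := by omega
      have h0 : (0 : ℤ) ≤ lo := Int.natCast_nonneg lo
      nlinarith
    exact not_const g.wf _ g1 g2 i j hb _ hag
  | w m hm as =>
    have hb := g.wf.big
    obtain ⟨q, k, o, hk, ho, ht⟩ := BD.locate _ (lt_of_lt_of_le (by norm_num) hb) i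
    have h1 := hag i le_rfl (by omega)
    rcases Nat.lt_or_ge o ((wBD GenSym.b (XS as) m (lastOf S m as)).pr k).length with h | h
    · have := BD.val_pr _ k o q hk h
      rw [← ht, h1] at this
      obtain ⟨a, ha⟩ := w_pr_mem (List.mem_of_getElem? this)
      rcases hz with rfl | rfl <;> cases ha
    · have := BD.val_y _ k o q hk h ho
      rw [← ht, h1] at this
      rcases hz with rfl | rfl <;> cases this

theorem base_sc (S : IndexedStructure) (p₁ p₂ : ℕ) (h1 : 10 ^ 10 < p₁) (h2 : 10 ^ 10 < p₂) :
    SC (Om (Base S p₁ p₂)) := by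
  have key : ∀ (D : BD (GenSym S.A)), Adm S D → ∀ i j : ℤ, D.per ≤ 20 * (j - i) → ∀ z,
      (∀ t, i ≤ t → t < j → D.seq t = z) → False := by
    intro D hD i j hij z hz
    have g := hD.good
    refine not_const g.wf (j - i) (fun k hk => ?_) ?_ i j le_rfl z hz
    · have := g.gap1 k hk
      omega
    · have := g.gap2
      omega
  apply sc_of_base
  · rintro β π (⟨D, hD, rfl, rfl⟩ | ⟨rfl, rfl⟩ | ⟨rfl, rfl⟩) k
    · have := D.seq_per 1 k
      rwa [one_mul] at this
    · rfl
    · rfl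
  · rintro β π (⟨D, hD, rfl, rfl⟩ | ⟨rfl, rfl⟩ | ⟨rfl, rfl⟩) k
    · exact BD.seq_red hD.good.wf k
    · simp [bar]
    · simp [bar]
  · rintro β π (⟨D, hD, rfl, rfl⟩ | ⟨rfl, rfl⟩ | ⟨rfl, rfl⟩)
    · exact hD.good.wf.big
    · omega
    · omega
  · rintro β π (⟨D, hD, rfl, rfl⟩ | ⟨rfl, rfl⟩ | ⟨rfl, rfl⟩) t t' e e'
    · exact BD.neg_sparse hD.good.wf t t' e e'
    · simp at e
    · simp at e
  · rintro β π β' π' i j d (⟨D, hD, rfl, rfl⟩ | ⟨rfl, rfl⟩ | ⟨rfl, rfl⟩)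
      (⟨D', hD', rfl, rfl⟩ | ⟨rfl, rfl⟩ | ⟨rfl, rfl⟩) hag hij
    · exact adm_rigid hD hD' i j d hag hij
    · exact (key D hD i j hij _ hag).elim
    · exact (key D hD i j hij _ hag).elim
    · refine (adm_pow hD' (i + d) (j + d) (by omega) _ (Or.inl rfl) fun t ht1 ht2 => ?_).elim
      have := hag (t - d) (by omega) (by omega)
      rw [sub_add_cancel] at this
      exact this.symm
    · exact ⟨fun _ => rfl, rfl⟩
    · have := hag i le_rfl (by omega)
      simp at this
    · refine (adm_pow hD' (i + d) (j + d) (by omega) _ (Or.inr rfl) fun t ht1 ht2 => ?_).elim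
      have := hag (t - d) (by omega) (by omega)
      rw [sub_add_cancel] at this
      exact this.symm
    · have := hag i le_rfl (by omega)
      simp at this
    · exact ⟨fun _ => rfl, rfl⟩

end SmallCanc

namespace SmallCanc
open FreeGroup

theorem E_Wn {α : Type} (D : BD α) : E D.seq 0 D.per = mk (D.Wn (D.K + 1)) := by
  have h := E_seg D.seq 0 (D.S (D.K + 1))
  rw [zero_add] at h
  change E D.seq 0 (D.S (D.K + 1) : ℤ) = _
  rw [h]
  congr 1
  apply List.ext_getElem
  · rw [seg_length]
    rfl
  · intro t h1 h2
    rw [seg_length] at h1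
    simp only [seg, List.getElem_map, List.getElem_range, zero_add]
    unfold BD.seq
    rw [Int.emod_eq_of_lt (by omega) (by unfold BD.per; omega), Int.toNat_natCast,
      List.getD_eq_getElem _ _ h2]

theorem mk_posL {α : Type} (l : List α) : (mk (posL l) : FreeGroup α) = (l.map FreeGroup.of).prod := by
  induction l with
  | nil => rfl
  | cons a l ih =>
    rw [List.map_cons, List.prod_cons, ← ih]
    rfl

theorem mk_rep {α : Type} (y : α) (n : ℕ) :
    (mk (List.replicate n (y, true)) : FreeGroup α) = FreeGroup.of y ^ n := by
  induction n with
  | zero => rfl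
  | succ n ih =>
    rw [pow_succ', ← ih, List.replicate_succ]
    rfl

theorem mk_blk {α : Type} (D : BD α) (k : ℕ) :
    (mk (D.blk k) : FreeGroup α) = mk (D.pr k) * FreeGroup.of D.y ^ D.ex k := by
  rw [BD.blk, ← mul_mk, mk_rep]

theorem mk_Wn {α : Type} (D : BD α) (n : ℕ) :
    (mk (D.Wn n) : FreeGroup α) = ((List.range n).map fun k => mk (D.blk k)).prod := by
  induction n with
  | zero => rfl
  | succ n ih =>
    rw [BD.Wn_succ, ← mul_mk, ih, List.prod_range_succ]

theorem rot {G : Type*} [Group G] (X Y T : G) (f : ℕ → ℕ) (n : ℕ) :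
    ((List.range (n + 1)).map fun k => X * Y ^ f k).prod * T =
    (X * Y ^ f 0) * (((List.range n).map fun k => X * Y ^ f (k + 1)).prod * (T * X * Y ^ f 0)) *
      (X * Y ^ f 0)⁻¹ := by
  rw [List.prod_range_succ' (fun k => X * Y ^ f k) n]
  group

theorem rel_form {α : Type} (D : BD α) (T : FreeGroup α) (f : ℕ → ℕ)
    (hT : mk D.last = T * mk (posL D.xs)) (hf : ∀ k < D.K, D.ex k = f (k + 1))
    (hfK : D.ex D.K = f 0) :
    ∃ g, ((List.range (D.K + 1)).map fun k => mk (posL D.xs) * FreeGroup.of D.y ^ f k).prod * T =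
      g * E D.seq 0 D.per * g⁻¹ := by
  refine ⟨mk (posL D.xs) * FreeGroup.of D.y ^ f 0, (rot _ _ T f D.K).trans ?_⟩
  congr 2
  rw [E_Wn, mk_Wn, List.prod_range_succ, mk_blk, D.pr_K, hT, hfK]
  congr 2
  apply List.map_congr_left
  intro k hk
  have hk := List.mem_range.1 hk
  rw [mk_blk, D.pr_lt hk, hf k hk]

theorem om_base {α : Type} {B : (ℤ → α × Bool) → ℤ → Prop} {β : ℤ → α × Bool} {π : ℤ} (h : B β π) :
    Om B β π := ⟨β, h, 0, Or.inl (by simp)⟩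

theorem chain_rel (S : IndexedStructure) (p₁ p₂ : ℕ) (x y : GenSym S.A) (lo : ℕ) (h : CH x y lo) :
    ∃ g ρ π, Om (Base S p₁ p₂) ρ π ∧
      chainProd lo (FreeGroup.of x) (FreeGroup.of y) = g * E ρ 0 π * g⁻¹ := by
  obtain ⟨g, hg⟩ := rel_form (chainBD x y lo) 1 (fun k => (lo + k + 1) ^ 2) (by rw [one_mul]; rfl)
    (by
      intro k hk
      change k < 999 at hk
      change cExp lo k = _
      unfold cExp
      rw [if_pos hk]
      ring) (by
      change cExp lo 999 = _
      unfold cExp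
      rw [if_neg (by omega), add_zero])
  refine ⟨g, _, _, om_base (Or.inl ⟨_, Adm.chain x y lo h, rfl, rfl⟩), ?_⟩
  rw [← hg, mul_one]
  rfl

theorem w_rel (S : IndexedStructure) (p₁ p₂ m : ℕ) (hm : 1 ≤ m) (as : Fin (S.arity m) → S.A)
    (T : FreeGroup (GenSym S.A)) (hT : mk (lastOf S m as) = T * mk (posL (XS as))) :
    ∃ g ρ π, Om (Base S p₁ p₂) ρ π ∧
      wProd m (fun i => FreeGroup.of (GenSym.elt (as i))) (FreeGroup.of GenSym.b) * T =
        g * E ρ 0 π * g⁻¹ := by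
  obtain ⟨g, hg⟩ := rel_form (wBD GenSym.b (XS as) m (lastOf S m as)) T (fun k => 100 * m + k + 1) hT
    (by
      intro k hk
      change k < 99 at hk
      change wExp m k = _
      unfold wExp
      rw [if_pos hk]
      ring) (by
      change wExp m 99 = _
      unfold wExp
      rw [if_neg (by omega)])
  refine ⟨g, _, _, om_base (Or.inl ⟨_, Adm.w m hm as, rfl, rfl⟩), ?_⟩
  rw [← hg]
  refine congrArg (· * T) ?_
  unfold wProd
  have e : (List.ofFn fun i => FreeGroup.of (GenSym.elt (as i))).prod = mk (posL (XS as)) := by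
    rw [mk_posL, XS, List.map_ofFn]
    rfl
  rw [e]
  rfl

theorem pow_rel {α : Type} (z : α) (p : ℕ) :
    FreeGroup.of z ^ p = 1 * E (fun _ => (z, true)) 0 (p : ℤ) * 1⁻¹ := by
  have := E_seg (fun _ => (z, true)) 0 p
  rw [zero_add] at this
  rw [this, seg, List.map_const', List.length_range, mk_rep]
  simp

theorem all_rel (S : IndexedStructure) (p₁ p₂ : ℕ) : ∀ r ∈ grpRels S p₁ p₂,
    ∃ g ρ π, Om (Base S p₁ p₂) ρ π ∧ r = g * E ρ 0 π * g⁻¹ := by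
  intro r hr
  rcases hr with ((hr | ⟨a, hr | hr⟩) | ⟨m, hm, hf, as, hr⟩) | ⟨m, hm, hf, as, -, hr⟩
  · simp only [Set.mem_insert_iff, Set.mem_singleton_iff] at hr
    rcases hr with hr | hr | hr | hr | hr | hr | hr | hr | hr | hr <;> rw [hr]
    · exact ⟨1, _, _, om_base (Or.inr (Or.inl ⟨rfl, rfl⟩)), pow_rel _ _⟩
    · exact ⟨1, _, _, om_base (Or.inr (Or.inr ⟨rfl, rfl⟩)), pow_rel _ _⟩
    all_goals
      apply chain_rel
      simp [CH]
  · rw [hr]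
    apply chain_rel
    simp [CH]
  · rw [hr]
    apply chain_rel
    simp [CH]
  · rw [hr]
    apply w_rel S p₁ p₂ m hm as
    unfold lastOf
    rw [if_pos hf]
    split_ifs with h
    · obtain ⟨l, hl⟩ : ∃ l, XS as = GenSym.elt (S.funcInterp m as) :: l := by
        cases hX : XS as with
        | nil => rw [hX] at h; cases h
        | cons z l => rw [hX] at h; cases h; exact ⟨l, rfl⟩
      rw [hl, mk_posL, mk_posL]
      simp
    · rfl
  · obtain ⟨g, ρ, π, h1, h2⟩ := w_rel S p₁ p₂ m hm as 1 (by unfold lastOf; rw [if_neg hf, one_mul])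
    exact ⟨g, ρ, π, h1, by rw [hr, ← h2, mul_one]⟩

theorem gen_inj (S : IndexedStructure) (p₁ p₂ : ℕ) (h1 : 10 ^ 10 < p₁) (h2 : 10 ^ 10 < p₂)
    (x x' : GenSym S.A) (h : gen S p₁ p₂ x' = gen S p₁ p₂ x) : x = x' := by
  classical
  apply FreeGroup.of_injective
  refine main_group (base_sc S p₁ p₂ h1 h2) _ (all_rel S p₁ p₂) _ _ (FreeGroup.norm_of x).le
    (FreeGroup.norm_of x').le ?_
  rw [← PresentedGroup.mk_eq_one_iff, _root_.map_mul, _root_.map_inv, mul_inv_eq_one]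
  exact h

theorem final (S : IndexedStructure) (p₁ p₂ : ℕ)
    (hbig₁ : 10 ^ 10 < p₁) (hbig₂ : 10 ^ 10 < p₂)
    (m : ℕ) (hm : 1 ≤ m) (hfun : S.isFunc m)
    (as : Fin (S.arity m) → S.A) (a' : S.A)
    (h : wProd m (fun i => gen S p₁ p₂ (GenSym.elt (as i))) (gen S p₁ p₂ GenSym.b) =
      gen S p₁ p₂ (GenSym.elt a')) :
    S.funcInterp m as = a' := by
  have hr : wProd m (fun i => FreeGroup.of (GenSym.elt (as i))) (FreeGroup.of GenSym.b) *
        (FreeGroup.of (GenSym.elt (S.funcInterp m as)))⁻¹ ∈ grpRels S p₁ p₂ :=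
    Or.inl (Or.inr ⟨m, hm, hfun, as, rfl⟩)
  have h3 := PresentedGroup.mk_eq_one_iff.2 (Subgroup.subset_normalClosure hr)
  rw [_root_.map_mul, _root_.map_inv, mul_inv_eq_one] at h3
  have h4 : PresentedGroup.mk (grpRels S p₁ p₂)
      (wProd m (fun i => FreeGroup.of (GenSym.elt (as i))) (FreeGroup.of GenSym.b)) =
      wProd m (fun i => gen S p₁ p₂ (GenSym.elt (as i))) (gen S p₁ p₂ GenSym.b) := by
    unfold wProd
    rw [map_list_prod, List.map_map]
    congr 2
    funext k
    simp only [Function.comp, _root_.map_mul, map_pow, map_list_prod, List.map_ofFn]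
    rfl
  apply GenSym.elt.inj
  apply gen_inj S p₁ p₂ hbig₁ hbig₂
  rw [← h, ← h4, h3]
  rfl

end SmallCanc

/-- Lemma `lem:functor-works`(1): if the `m`-th symbol of `L` is a function
symbol `f` of arity `n`, and `a₁,…,aₙ, a' ∈ A` are such that `w_m(a₁,…,aₙ,b) = a'` holds in
`G(𝒜)`, then `f^𝒜(a₁,…,aₙ) = a'` in `𝒜`. -/
theorem stmt_3 (S : IndexedStructure) (p₁ p₂ : ℕ)
    (hp₁ : p₁.Prime) (hp₂ : p₂.Prime) (hne : p₁ ≠ p₂)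
    (hbig₁ : 10 ^ 10 < p₁) (hbig₂ : 10 ^ 10 < p₂)
    (m : ℕ) (hm : 1 ≤ m) (hfun : S.isFunc m)
    (as : Fin (S.arity m) → S.A) (a' : S.A)
    (h : wProd m (fun i => gen S p₁ p₂ (GenSym.elt (as i))) (gen S p₁ p₂ GenSym.b) =
      gen S p₁ p₂ (GenSym.elt a')) :
    S.funcInterp m as = a' := by
  exact SmallCanc.final S p₁ p₂ hbig₁ hbig₂ m hm hfun as a' h
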